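/- Let B be a finite-dimensional algebra over a field k such that B/rad(B) is a separable k-algebra. Then B is twisted periodic if and only if every simple right B-module is Ω-periodic. -/

import Mathlib

open TensorProduct

/-- There is an exact sequence `0 → M → P_n → ⋯ → P_1 → N → 0` of `R`-modules
(so with `n` middle terms) in which each middle term `P_i` is projective. -/
def HasProjExactSeq (R : Type) [Ring R] (M N : ModuleCat R) (n : ℕ) : Prop :=
  ∃ (P : ℕ → ModuleCat R) (d : ∀ i, P (i + 1) →ₗ[R] P i)
    (_ : (P 0 : Type) ≃ₗ[R] N) (_ : (M : Type) ≃ₗ[R] P (n + 1)),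
    (∀ i, 1 ≤ i → i ≤ n → Module.Projective R (P i)) ∧
    Function.Surjective (d 0) ∧ Function.Injective (d n) ∧
    ∀ i < n, LinearMap.range (d (i + 1)) = LinearMap.ker (d i)

/-- The regular bimodule `B` as a module over the enveloping algebra `B ⊗[k] Bᵐᵒᵖ`. -/
noncomputable def regularBimodule (k B : Type) [Field k] [Ring B] [Algebra k B] :
    ModuleCat (B ⊗[k] Bᵐᵒᵖ) :=
  letI : Module (B ⊗[k] Bᵐᵒᵖ) B := TensorProduct.Algebra.module
  ModuleCat.of _ B

/-- The twisted bimodule `₁B_φ` (underlying set `B`, right action twisted by `φ`,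
i.e. `a • x • b = a * x * φ b`) as a module over the enveloping algebra `B ⊗[k] Bᵐᵒᵖ`. -/
noncomputable def twistedBimodule (k B : Type) [Field k] [Ring B] [Algebra k B]
    (φ : B ≃ₐ[k] B) : ModuleCat (B ⊗[k] Bᵐᵒᵖ) :=
  letI : Module (B ⊗[k] Bᵐᵒᵖ) B := TensorProduct.Algebra.module
  letI : Module (B ⊗[k] Bᵐᵒᵖ) B :=
    Module.compHom B
      (Algebra.TensorProduct.map (AlgHom.id k B) (AlgEquiv.op φ).toAlgHom).toRingHom
  ModuleCat.of _ B

/-- A finite-dimensional `k`-algebra `B` is twisted periodic if there are `n ≥ 1`, an algebra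
automorphism `φ` of `B`, and an exact sequence `0 → ₁B_φ → P_{n-1} → ⋯ → P_0 → B → 0` of
bimodules with all `P_i` projective over `B ⊗[k] Bᵐᵒᵖ`. -/
noncomputable def IsTwistedPeriodicAlgebra (k B : Type) [Field k] [Ring B] [Algebra k B] : Prop :=
  ∃ (n : ℕ) (φ : B ≃ₐ[k] B), 1 ≤ n ∧
    HasProjExactSeq (B ⊗[k] Bᵐᵒᵖ) (twistedBimodule k B φ) (regularBimodule k B) n

/-!
For a right ideal `I`, consider the functor `X ↦ X / I X = B / I ⊗_B X` from bimodules to right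
modules. It is exact on sequences of left projective bimodules, it turns projective bimodules into
projective modules, and it turns `B` into `B / I`.

If `B` is twisted periodic, applying it for a maximal `I` shows that the twist of a simple module
`S` by the automorphism is an `n`-th syzygy of `S`. There are finitely many simple modules, so some
iterated twist of `S` is `S` again.

Conversely, let `n` be a common period of the simple modules. As `B / rad B` is separable,
`rad (B ⊗ Bᵐᵒᵖ)` is contained in `rad B ⊗ Bᵐᵒᵖ + B ⊗ rad Bᵐᵒᵖ`, so for maximal `I` the functor
preserves projective covers, hence minimal syzygies. The `n`-th minimal bimodule syzygy `X` of `B`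
therefore satisfies `B / I ⊗_B X ≅ B / I` whenever `B / I` is not projective, and adding to `X` a
projective bimodule repairs the simple projective `B / I`. For the new `X`, Nakayama's lemma and a
comparison of lengths give `X_B ≅ B_B`; left multiplication then becomes an endomorphism of `B`,
which is injective because `b X = 0` would force `X = I X` for a maximal `I` containing the right
annihilator of `b`. Hence `X` is a twisted bimodule.
-/

universe u v

section RadicalKernel

variable {R : Type u} [Ring R]

theorem jacobson_le_ringJacobson_smul_top [IsSemiprimaryRing R] (M : Type v) [AddCommGroup M]
    [Module R M] : Module.jacobson R M ≤ Ring.jacobson R • (⊤ : Submodule R M) := by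
  have torsion : Module.IsTorsionBySet R (M ⧸ Ring.jacobson R • (⊤ : Submodule R M))
      (Ring.jacobson R) := by
    rw [Module.isTorsionBySet_quotient_iff]
    exact fun m r hr ↦ Submodule.smul_mem_smul hr trivial
  let _ := torsion.module
  have : IsSemisimpleModule R (M ⧸ Ring.jacobson R • (⊤ : Submodule R M)) :=
    torsion.isSemisimpleModule_iff.1 inferInstance
  exact Module.jacobson_le_of_eq_bot (IsSemisimpleModule.jacobson_eq_bot R _)

theorem eq_top_of_sup_jacobson_smul_top [IsSemiprimaryRing R] {M : Type v} [AddCommGroup M]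
    [Module R M] (N : Submodule R M) (hN : N ⊔ Ring.jacobson R • (⊤ : Submodule R M) = ⊤) :
    N = ⊤ := by
  have sup_pow (n : ℕ) : N ⊔ Ring.jacobson R ^ n • (⊤ : Submodule R M) = ⊤ := by
    induction n with
    | zero => rw [Submodule.pow_zero, Ideal.one_eq_top, Submodule.top_smul, sup_top_eq]
    | succ n ih =>
      have absorb : Ring.jacobson R ^ n • (⊤ : Submodule R M) ≤
          N ⊔ Ring.jacobson R ^ (n + 1) • (⊤ : Submodule R M) := by
        conv_lhs => rw [← hN]
        rw [Submodule.smul_sup, ← Submodule.mul_smul, ← Submodule.pow_succ]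
        exact sup_le_sup_right Submodule.smul_le_right _
      exact top_le_iff.1 (ih.ge.trans (sup_le le_sup_left absorb))
  obtain ⟨n, hn⟩ := IsSemiprimaryRing.isNilpotent (R := R)
  simpa [hn] using sup_pow n

variable {M N P Q : Type*} [AddCommGroup M] [Module R M] [AddCommGroup N] [Module R N]
  [AddCommGroup P] [Module R P] [AddCommGroup Q] [Module R Q]

/-- The kernel of `p` lies in the radical of its domain. A surjection with this property from a
projective module is a projective cover. -/
def HasRadicalKernel (p : P →ₗ[R] M) : Prop :=
  LinearMap.ker p ≤ Ring.jacobson R • (⊤ : Submodule R P)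

theorem map_mem_jacobson_smul_top (f : P →ₗ[R] Q) {x : P}
    (hx : x ∈ Ring.jacobson R • (⊤ : Submodule R P)) :
    f x ∈ Ring.jacobson R • (⊤ : Submodule R Q) := by
  have := Submodule.mem_map_of_mem (f := f) hx
  rw [Submodule.map_smul''] at this
  exact Submodule.smul_mono le_rfl le_top this

namespace HasRadicalKernel

theorem equiv_comp {p : P →ₗ[R] M} (hp : HasRadicalKernel p) (e : M ≃ₗ[R] N) :
    HasRadicalKernel (e.toLinearMap ∘ₗ p) := by
  rwa [HasRadicalKernel, LinearEquiv.ker_comp]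

theorem prodMap_id {p : P →ₗ[R] M} (hp : HasRadicalKernel p) :
    HasRadicalKernel (p.prodMap (LinearMap.id : Q →ₗ[R] Q)) := by
  rintro ⟨x, y⟩ hxy
  obtain ⟨hx, rfl⟩ : p x = 0 ∧ y = 0 := by simpa using hxy
  exact map_mem_jacobson_smul_top (LinearMap.inl R P Q) (hp hx)

theorem surjective_of_comp [IsSemiprimaryRing R] {p : P →ₗ[R] M} (hp : HasRadicalKernel p)
    {f : Q →ₗ[R] P} (hf : Function.Surjective (p ∘ₗ f)) : Function.Surjective f := by
  refine LinearMap.range_eq_top.1 (eq_top_of_sup_jacobson_smul_top _ (top_le_iff.1 fun x _ ↦ ?_))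
  obtain ⟨y, hy⟩ := hf (p x)
  have hker : x - f y ∈ LinearMap.ker p := by simpa [sub_eq_zero] using hy.symm
  simpa using Submodule.add_mem_sup (LinearMap.mem_range_self f y) (hp hker)

theorem bijective_of_projective [IsSemiprimaryRing R] [Module.Projective R M] {p : P →ₗ[R] M}
    (hp : HasRadicalKernel p) (hsurj : Function.Surjective p) : Function.Bijective p := by
  obtain ⟨s, hs⟩ := Module.projective_lifting_property p LinearMap.id hsurj
  have hs_surj : Function.Surjective s :=
    hp.surjective_of_comp (by rw [hs]; exact Function.surjective_id)
  have left_inv : Function.LeftInverse p s := LinearMap.congr_fun hs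
  exact ⟨(left_inv.rightInverse_of_surjective hs_surj).injective, hsurj⟩

end HasRadicalKernel

variable (π : P →ₗ[R] M) {P' : Submodule R P}

theorem eq_top_of_minimal_of_map_domRestrict (hP' : Minimal (fun N ↦ N.map π = ⊤) P')
    {N : Submodule R P'} (hN : N.map (π.domRestrict P') = ⊤) : N = ⊤ := by
  have hmap : (N.map P'.subtype).map π = ⊤ := by rwa [← Submodule.map_comp]
  have heq := hP'.eq_of_le hmap (Submodule.map_subtype_le P' N)
  exact Submodule.map_injective_of_injective P'.injective_subtype
    (heq.trans (Submodule.map_subtype_top P').symm)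

theorem hasRadicalKernel_domRestrict_of_minimal [IsSemiprimaryRing R]
    (hP' : Minimal (fun N ↦ N.map π = ⊤) P') : HasRadicalKernel (π.domRestrict P') := by
  refine le_trans (le_sInf fun N hN ↦ ?_) (jacobson_le_ringJacobson_smul_top P')
  by_contra hker
  have hsup : N ⊔ LinearMap.ker (π.domRestrict P') = ⊤ := hN.2 _ (left_lt_sup.2 hker)
  have hrange := (LinearMap.range_domRestrict P' π).trans hP'.prop
  exact hN.1 (eq_top_of_minimal_of_map_domRestrict π hP' ((LinearMap.map_eq_top_iff hrange).2 hsup))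

theorem projective_of_minimal [IsNoetherian R P] [Module.Projective R P]
    (hP' : Minimal (fun N ↦ N.map π = ⊤) P') : Module.Projective R P' := by
  have hsurj : Function.Surjective (π.domRestrict P') :=
    LinearMap.range_eq_top.1 ((LinearMap.range_domRestrict P' π).trans hP'.prop)
  obtain ⟨f, hf⟩ := Module.projective_lifting_property _ π hsurj
  have hg : Function.Surjective (f ∘ₗ P'.subtype) := by
    refine LinearMap.range_eq_top.1 (eq_top_of_minimal_of_map_domRestrict π hP' ?_)
    rw [← LinearMap.range_comp, ← LinearMap.comp_assoc, hf]
    exact LinearMap.range_eq_top.2 hsurj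
  let g := LinearEquiv.ofBijective (f ∘ₗ P'.subtype)
    ⟨IsNoetherian.injective_of_surjective_endomorphism _ hg, hg⟩
  refine .of_split P'.subtype (g.symm.toLinearMap ∘ₗ f) (LinearMap.ext fun x ↦ ?_)
  exact g.symm_apply_apply x

theorem exists_projective_cover [IsArtinianRing R] (M : Type v) [AddCommGroup M] [Module R M]
    [Module.Finite R M] : ∃ (P : ModuleCat.{u} R) (p : P →ₗ[R] M), Module.Finite R P ∧
      Module.Projective R P ∧ Function.Surjective p ∧ HasRadicalKernel p := by
  obtain ⟨n, π, hπ⟩ := Module.Finite.exists_fin' R M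
  obtain ⟨P', hP'⟩ := exists_minimal_of_wellFoundedLT
    (fun N : Submodule R (Fin n → R) ↦ N.map π = ⊤)
    ⟨⊤, by rwa [Submodule.map_top, LinearMap.range_eq_top]⟩
  exact ⟨.of R P', π.domRestrict P', inferInstanceAs (Module.Finite R P'),
    projective_of_minimal π hP',
    LinearMap.range_eq_top.1 ((LinearMap.range_domRestrict P' π).trans hP'.prop),
    hasRadicalKernel_domRestrict_of_minimal π hP'⟩

end RadicalKernel

section ProjShortExact

variable {R : Type u} [Ring R] {K L M N P Q : Type v} [AddCommGroup K] [Module R K]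
  [AddCommGroup L] [Module R L] [AddCommGroup M] [Module R M] [AddCommGroup N] [Module R N]
  [AddCommGroup P] [Module R P] [AddCommGroup Q] [Module R Q]

/-- `0 → L → P → M → 0` is a short exact sequence with projective middle term. -/
structure IsProjShortExact (i : L →ₗ[R] P) (p : P →ₗ[R] M) : Prop where
  projective : Module.Projective R P
  injective : Function.Injective i
  exact : Function.Exact i p
  surjective : Function.Surjective p

theorem isProjShortExact_ker_subtype [Module.Projective R P] {p : P →ₗ[R] M}
    (hp : Function.Surjective p) : IsProjShortExact (LinearMap.ker p).subtype p :=
  ⟨inferInstance, Subtype.val_injective, LinearMap.exact_subtype_ker_map p, hp⟩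

namespace IsProjShortExact

variable {i : L →ₗ[R] P} {p : P →ₗ[R] M}

theorem equiv_comp (h : IsProjShortExact i p) (e : M ≃ₗ[R] N) :
    IsProjShortExact i (e.toLinearMap ∘ₗ p) where
  projective := h.projective
  injective := h.injective
  exact := h.exact.comp_injective e e.injective e.map_zero
  surjective := e.surjective.comp h.surjective

theorem comp_equiv (h : IsProjShortExact i p) (e : K ≃ₗ[R] L) :
    IsProjShortExact (i ∘ₗ e.toLinearMap) p where
  projective := h.projective
  injective := h.injective.comp e.injective
  exact := (e.surjective.comp_exact_iff_exact).2 h.exact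
  surjective := h.surjective

variable (Q) in
theorem prodMap_left [Module.Projective R Q] (h : IsProjShortExact i p) :
    IsProjShortExact (i.prodMap (LinearMap.id : Q →ₗ[R] Q)) (p ∘ₗ LinearMap.fst R P Q) where
  projective := have := h.projective; inferInstance
  injective := h.injective.prodMap Function.injective_id
  exact := fun x ↦ (h.exact x.1).trans
    ⟨fun ⟨y, hy⟩ ↦ ⟨(y, x.2), Prod.ext hy rfl⟩, fun ⟨y, hy⟩ ↦ ⟨y.1, congrArg Prod.fst hy⟩⟩
  surjective := h.surjective.comp LinearMap.fst_surjective

variable (Q) in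
theorem prodMap_right [Module.Projective R Q] (h : IsProjShortExact i p) :
    IsProjShortExact (LinearMap.inl R P Q ∘ₗ i) (p.prodMap (LinearMap.id : Q →ₗ[R] Q)) where
  projective := have := h.projective; inferInstance
  injective := LinearMap.inl_injective.comp h.injective
  exact := by
    rintro ⟨x, y⟩
    rw [LinearMap.prodMap_apply, Prod.mk_eq_zero, h.exact x]
    exact ⟨fun ⟨⟨z, hz⟩, hy⟩ ↦ ⟨z, Prod.ext hz hy.symm⟩,
      fun ⟨z, hz⟩ ↦ ⟨⟨z, congrArg Prod.fst hz⟩, (congrArg Prod.snd hz).symm⟩⟩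
  surjective := h.surjective.prodMap Function.surjective_id

/-- The first term of a short exact sequence is the kernel of its second map. -/
noncomputable def equivKer (h : IsProjShortExact i p) : L ≃ₗ[R] LinearMap.ker p :=
  LinearEquiv.ofInjective i h.injective ≪≫ₗ LinearEquiv.ofEq _ _ h.exact.linearMap_ker_eq.symm

end IsProjShortExact

/-- A section `s` of `f` splits the kernel of `p ∘ f` into the kernels of `p` and `f`. -/
def kerCompEquivProd (p : P →ₗ[R] M) (f : Q →ₗ[R] P) (s : P →ₗ[R] Q)
    (hs : f ∘ₗ s = LinearMap.id) :
    LinearMap.ker (p ∘ₗ f) ≃ₗ[R] LinearMap.ker p × LinearMap.ker f where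
  toFun x := (⟨f x, x.2⟩, ⟨x - s (f x), by simp [show f (s (f x)) = f x from
    LinearMap.congr_fun hs _]⟩)
  map_add' x y := by ext <;> simp [add_sub_add_comm]
  map_smul' r x := by ext <;> simp [smul_sub]
  invFun y := ⟨s y.1 + y.2, by simp [show f (s y.1) = y.1 from LinearMap.congr_fun hs _]⟩
  left_inv x := by ext; simp
  right_inv y := by ext <;> simp [show f (s y.1) = y.1 from LinearMap.congr_fun hs _]

/-- `K` is isomorphic to the direct sum of `L` and a projective module. -/
def IsSumWithProjective (R : Type u) [Ring R] (K L : Type v) [AddCommGroup K] [Module R K]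
    [AddCommGroup L] [Module R L] : Prop :=
  ∃ Z : ModuleCat.{v} R, Module.Projective R Z ∧ Nonempty (K ≃ₗ[R] L × Z)

theorem projective_ker_of_comp_eq_id [Module.Projective R Q] {f : Q →ₗ[R] P} {s : P →ₗ[R] Q}
    (hs : f ∘ₗ s = LinearMap.id) : Module.Projective R (LinearMap.ker f) := by
  refine .of_split (LinearMap.ker f).subtype
    ((LinearMap.id - s ∘ₗ f).codRestrict (LinearMap.ker f) fun x ↦ ?_)
    (LinearMap.ext fun x ↦ ?_)
  · ext
    simp
  · simpa [sub_eq_zero] using (LinearMap.congr_fun hs (f x)).symm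

/-- Schanuel's lemma against a projective cover. -/
theorem IsProjShortExact.isSumWithProjective [IsSemiprimaryRing R] {i : L →ₗ[R] P} {p : P →ₗ[R] M}
    {j : K →ₗ[R] Q} {q : Q →ₗ[R] M} (h : IsProjShortExact j q) (h' : IsProjShortExact i p)
    (hp : HasRadicalKernel p) : IsSumWithProjective R K L := by
  have := h.projective
  have := h'.projective
  obtain ⟨f, rfl⟩ := Module.projective_lifting_property p q h'.surjective
  have hf : Function.Surjective f := hp.surjective_of_comp h.surjective
  obtain ⟨s, hs⟩ := Module.projective_lifting_property f LinearMap.id hf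
  exact ⟨.of R (LinearMap.ker f), projective_ker_of_comp_eq_id hs,
    ⟨h.equivKer ≪≫ₗ kerCompEquivProd p f s hs ≪≫ₗ h'.equivKer.symm.prodCongr (.refl R _)⟩⟩

theorem IsProjShortExact.subsingleton_of_projective [IsSemiprimaryRing R] [Module.Projective R M]
    {i : L →ₗ[R] P} {p : P →ₗ[R] M} (h : IsProjShortExact i p) (hp : HasRadicalKernel p) :
    Subsingleton L := by
  refine ⟨fun x y ↦ h.injective ((hp.bijective_of_projective h.surjective).injective ?_)⟩
  rw [h.exact.apply_apply_eq_zero, h.exact.apply_apply_eq_zero]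

end ProjShortExact

section Syzygy

variable {R : Type u} [Ring R]

/-- `K` is an `n`-th syzygy of `M`: there is an exact sequence
`0 → K → P_{n-1} → ⋯ → P_0 → M → 0` with all `P_i` projective, spliced from short ones. -/
inductive IsSyzygy (K : ModuleCat.{v} R) : ℕ → ModuleCat.{v} R → Prop
  | of_equiv {M : ModuleCat.{v} R} (e : K ≃ₗ[R] M) : IsSyzygy K 0 M
  | step {n : ℕ} {M P L : ModuleCat.{v} R} {i : L →ₗ[R] P} {p : P →ₗ[R] M}
      (hip : IsProjShortExact i p) (h : IsSyzygy K n L) : IsSyzygy K (n + 1) M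

/-- `K` is a minimal `n`-th syzygy of `M`: each projective in the exact sequence is a projective
cover of the image of its differential. -/
inductive IsMinimalSyzygy (K : ModuleCat.{v} R) : ℕ → ModuleCat.{v} R → Prop
  | of_equiv {M : ModuleCat.{v} R} (e : K ≃ₗ[R] M) : IsMinimalSyzygy K 0 M
  | step {n : ℕ} {M P L : ModuleCat.{v} R} {i : L →ₗ[R] P} {p : P →ₗ[R] M}
      (hip : IsProjShortExact i p) (hp : HasRadicalKernel p) (h : IsMinimalSyzygy K n L) :
      IsMinimalSyzygy K (n + 1) M

variable {K L M N : ModuleCat.{v} R} {n m : ℕ}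

theorem IsMinimalSyzygy.isSyzygy (h : IsMinimalSyzygy K n M) : IsSyzygy K n M := by
  induction h with
  | of_equiv e => exact .of_equiv e
  | step hip _ _ ih => exact .step hip ih

namespace IsSyzygy

theorem congr_right (h : IsSyzygy K n M) (e : M ≃ₗ[R] N) : IsSyzygy K n N := by
  cases h with
  | of_equiv e' => exact .of_equiv (e' ≪≫ₗ e)
  | step hip h => exact .step (hip.equiv_comp e) h

theorem congr_left (h : IsSyzygy K n M) (e : K ≃ₗ[R] N) : IsSyzygy N n M := by
  induction h with
  | of_equiv e' => exact .of_equiv (e.symm ≪≫ₗ e')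
  | step hip _ ih => exact .step hip ih

theorem trans (h : IsSyzygy K n M) (h' : IsSyzygy M m N) : IsSyzygy K (n + m) N := by
  induction h' with
  | of_equiv e => exact h.congr_right e
  | step hip _ ih => exact .step hip ih

theorem mul (h : IsSyzygy K n K) (m : ℕ) : IsSyzygy K (n * m) K := by
  induction m with
  | zero => exact .of_equiv (.refl R K)
  | succ m ih => exact ih.trans h

theorem prod_projective (h : IsSyzygy K (n + 1) M) (Z : ModuleCat.{v} R)
    [Module.Projective R Z] : IsSyzygy (.of R (K × Z)) (n + 1) M := by
  induction n generalizing M with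
  | zero =>
    obtain _ | @⟨_, _, P, _, _, _, hip, ⟨e⟩⟩ := h
    exact .step (P := .of R (P × Z)) ((hip.comp_equiv e).prodMap_left Z) (.of_equiv (.refl R _))
  | succ n ih =>
    obtain _ | ⟨hip, h⟩ := h
    exact .step hip (ih h)

theorem isSumWithProjective_of_isMinimalSyzygy [IsSemiprimaryRing R] (h : IsSyzygy K n M)
    (h' : IsMinimalSyzygy L n N) (hMN : IsSumWithProjective R M N) :
    IsSumWithProjective R K L := by
  induction n generalizing M N with
  | zero =>
    obtain ⟨e⟩ := h
    obtain ⟨e'⟩ := h'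
    obtain ⟨Z, hZ, ⟨e₀⟩⟩ := hMN
    exact ⟨Z, hZ, ⟨e ≪≫ₗ e₀ ≪≫ₗ e'.symm.prodCongr (.refl R Z)⟩⟩
  | succ n ih =>
    obtain _ | ⟨hjq, h⟩ := h
    obtain _ | ⟨hip, hp, h'⟩ := h'
    obtain ⟨Z, hZ, ⟨e₀⟩⟩ := hMN
    exact ih h h' (hjq.isSumWithProjective ((hip.prodMap_right Z).equiv_comp e₀.symm)
      (hp.prodMap_id.equiv_comp e₀.symm))

end IsSyzygy

theorem IsSumWithProjective.refl (M : ModuleCat.{v} R) : IsSumWithProjective R M M :=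
  ⟨.of R PUnit, inferInstanceAs (Module.Projective R PUnit.{v + 1}), ⟨LinearEquiv.prodUnique.symm⟩⟩

theorem exists_isMinimalSyzygy {R : Type u} [Ring R] [IsArtinianRing R] (n : ℕ)
    (M : ModuleCat.{u} R) [Module.Finite R M] :
    ∃ K : ModuleCat.{u} R, IsMinimalSyzygy K n M := by
  induction n generalizing M with
  | zero => exact ⟨M, .of_equiv (.refl R M)⟩
  | succ n ih =>
    obtain ⟨P, p, _, _, hsurj, hp⟩ := exists_projective_cover (R := R) M
    have : Module.Finite R (ModuleCat.of R (LinearMap.ker p)) :=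
      inferInstanceAs (Module.Finite R (LinearMap.ker p))
    obtain ⟨K, h⟩ := ih (.of R (LinearMap.ker p))
    exact ⟨K, .step (isProjShortExact_ker_subtype hsurj) hp h⟩

theorem IsMinimalSyzygy.subsingleton_of_projective [IsSemiprimaryRing R] [Module.Projective R M]
    (h : IsMinimalSyzygy K (n + 1) M) : Subsingleton K := by
  induction n generalizing M with
  | zero =>
    obtain _ | ⟨hip, hp, ⟨e⟩⟩ := h
    have := hip.subsingleton_of_projective hp
    exact e.injective.subsingleton
  | succ n ih =>
    obtain _ | ⟨hip, hp, h⟩ := h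
    have := hip.subsingleton_of_projective hp
    exact ih h

end Syzygy

namespace HasProjExactSeq

variable {R : Type} [Ring R] {K L M P : ModuleCat.{0} R} {n : ℕ}

theorem of_equiv (e : K ≃ₗ[R] M) : HasProjExactSeq R K M 0 :=
  ⟨fun | 0 => M | _ + 1 => K, fun | 0 => e.toLinearMap | _ + 1 => 0, .refl R M, .refl R K,
    fun _ _ _ ↦ by omega, e.surjective, e.injective, fun _ hi ↦ absurd hi (Nat.not_lt_zero _)⟩

theorem nonempty_equiv (h : HasProjExactSeq R K M 0) : Nonempty (K ≃ₗ[R] M) := by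
  obtain ⟨P, d, e, e', -, hsurj, hinj, -⟩ := h
  exact ⟨e' ≪≫ₗ .ofBijective (d 0) ⟨hinj, hsurj⟩ ≪≫ₗ e⟩

theorem cons {i : L →ₗ[R] P} {p : P →ₗ[R] M} (hip : IsProjShortExact i p)
    (h : HasProjExactSeq R K L n) : HasProjExactSeq R K M (n + 1) := by
  obtain ⟨Q, d, e, e', hQ, hsurj, hinj, hexact⟩ := h
  have hsurj' : Function.Surjective (e.toLinearMap ∘ₗ d 0) := e.surjective.comp hsurj
  refine ⟨fun | 0 => M | 1 => P | j + 2 => Q (j + 1),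
    fun | 0 => p | 1 => i ∘ₗ e.toLinearMap ∘ₗ d 0 | j + 2 => d (j + 1),
    .refl R M, e', ?_, hip.surjective, ?_, ?_⟩
  · rintro (_ | _ | j) hj hjn
    · omega
    · exact hip.projective
    · exact hQ _ (by omega) (by omega)
  · cases n with
    | zero => exact hip.injective.comp (e.injective.comp hinj)
    | succ n => exact hinj
  · rintro (_ | _ | j) hj
    · exact (LinearMap.range_comp_of_range_eq_top i (LinearMap.range_eq_top.2 hsurj')).trans
        hip.exact.linearMap_ker_eq.symm
    · refine (hexact 0 (by omega)).trans ?_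
      rw [LinearMap.ker_comp_of_ker_eq_bot _ (LinearMap.ker_eq_bot.2 hip.injective),
        LinearEquiv.ker_comp]
    · exact hexact (j + 1) (by omega)

theorem uncons (h : HasProjExactSeq R K M (n + 1)) :
    ∃ (P L : ModuleCat.{0} R) (i : L →ₗ[R] P) (p : P →ₗ[R] M),
      IsProjShortExact i p ∧ HasProjExactSeq R K L n := by
  obtain ⟨P, d, e, e', hP, hsurj, hinj, hexact⟩ := h
  have : Module.Projective R (P 1) := hP 1 le_rfl (by omega)
  have hd (x : P 2) : d 1 x ∈ LinearMap.ker (d 0) := hexact 0 (by omega) ▸ ⟨x, rfl⟩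
  refine ⟨P 1, .of R (LinearMap.ker (d 0)), _, _,
    (isProjShortExact_ker_subtype hsurj).equiv_comp e,
    fun | 0 => .of R (LinearMap.ker (d 0)) | j + 1 => P (j + 2),
    fun | 0 => (d 1).codRestrict (LinearMap.ker (d 0)) hd | j + 1 => d (j + 2),
    .refl R _, e', ?_, ?_, ?_, ?_⟩
  · rintro (_ | j) hj hjn
    · omega
    · exact hP _ (by omega) (by omega)
  · rintro ⟨x, hx⟩
    obtain ⟨y, rfl⟩ := (hexact 0 (by omega)).ge hx
    exact ⟨y, rfl⟩
  · cases n with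
    | zero => exact fun x y hxy ↦ hinj (congrArg Subtype.val hxy)
    | succ n => exact hinj
  · rintro (_ | j) hj
    · exact (hexact 1 (by omega)).trans (LinearMap.ker_codRestrict _ _ hd).symm
    · exact hexact (j + 2) (by omega)

end HasProjExactSeq

theorem hasProjExactSeq_iff_isSyzygy {R : Type} [Ring R] {K M : ModuleCat.{0} R} {n : ℕ} :
    HasProjExactSeq R K M n ↔ IsSyzygy K n M := by
  refine ⟨fun h ↦ ?_, fun h ↦ ?_⟩
  · induction n generalizing M with
    | zero => exact .of_equiv h.nonempty_equiv.some
    | succ n ih =>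
      obtain ⟨P, L, i, p, hip, h⟩ := h.uncons
      exact .step hip (ih h)
  · induction h with
    | of_equiv e => exact .of_equiv e
    | step hip _ ih => exact .cons hip ih

section Simple

variable {R : Type u} [Ring R]

theorem exists_finite_simple_targets {N : Type v} [AddCommGroup N] [Module R N]
    (hN : IsFiniteLength R N) :
    ∃ s : Set (ModuleCat.{v} R), s.Finite ∧ (∀ S ∈ s, IsSimpleModule R S) ∧
      ∀ (M : Type v) [AddCommGroup M] [Module R M] [IsSimpleModule R M] (f : N →ₗ[R] M),
        f ≠ 0 → ∃ S ∈ s, Nonempty (M ≃ₗ[R] S) := by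
  induction hN with
  | of_subsingleton =>
    exact ⟨∅, Set.finite_empty, by simp, fun M _ _ _ f hf ↦ absurd (Subsingleton.elim f 0) hf⟩
  | @of_simple_quotient N _ _ N' _ _ ih =>
    obtain ⟨s, hs, hsimple, hmem⟩ := ih
    refine ⟨insert (.of R (N ⧸ N')) s, hs.insert _, ?_, fun M _ _ _ f hf ↦ ?_⟩
    · rintro S (rfl | hS)
      exacts [‹IsSimpleModule R (N ⧸ N')›, hsimple S hS]
    by_cases hres : f ∘ₗ N'.subtype = 0
    · have hle : N' ≤ LinearMap.ker f := fun x hx ↦ LinearMap.congr_fun hres ⟨x, hx⟩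
      have hne : N'.liftQ f hle ≠ 0 := fun h ↦ hf (by
        rw [← N'.liftQ_mkQ f hle, h, LinearMap.zero_comp])
      exact ⟨_, Set.mem_insert _ _, ⟨(LinearEquiv.ofBijective _
        (LinearMap.bijective_of_ne_zero hne)).symm⟩⟩
    · obtain ⟨S, hS, he⟩ := hmem M _ hres
      exact ⟨S, Set.mem_insert_of_mem _ hS, he⟩

variable (R) in
theorem exists_finite_simple_representatives [IsArtinianRing R] :
    ∃ s : Set (ModuleCat.{u} R), s.Finite ∧ (∀ S ∈ s, IsSimpleModule R S) ∧
      ∀ (M : Type u) [AddCommGroup M] [Module R M] [IsSimpleModule R M],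
        ∃ S ∈ s, Nonempty (M ≃ₗ[R] S) := by
  obtain ⟨s, hs, hsimple, hmem⟩ := exists_finite_simple_targets (R := R) (N := R)
    (isFiniteLength_iff_isNoetherian_isArtinian.2 ⟨inferInstance, inferInstance⟩)
  refine ⟨s, hs, hsimple, fun M _ _ _ ↦ ?_⟩
  have := IsSimpleModule.nontrivial R M
  obtain ⟨x, hx⟩ := exists_ne (0 : M)
  refine hmem M (LinearMap.toSpanSingleton R M x) fun h ↦ hx ?_
  simpa using LinearMap.congr_fun h 1

theorem exists_common_period_of_finite {s : Set (ModuleCat.{v} R)} (hs : s.Finite)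
    (h : ∀ S ∈ s, ∃ m, 1 ≤ m ∧ IsSyzygy S m S) : ∃ n, ∀ S ∈ s, IsSyzygy S (n + 1) S := by
  induction s, hs using Set.Finite.induction_on with
  | empty => exact ⟨0, by simp⟩
  | @insert S₀ s _ _ ih =>
    obtain ⟨n, hn⟩ := ih fun S hS ↦ h S (Set.mem_insert_of_mem _ hS)
    obtain ⟨m, hm, hS₀⟩ := h S₀ (Set.mem_insert _ _)
    obtain ⟨m, rfl⟩ := Nat.exists_eq_add_of_le' hm
    refine ⟨(n + 1) * m + n, ?_⟩
    rintro S (rfl | hS)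
    · rw [show (n + 1) * m + n + 1 = (m + 1) * (n + 1) by ring]
      exact hS₀.mul _
    · exact (hn S hS).mul (m + 1)

theorem exists_common_period [IsArtinianRing R]
    (h : ∀ (M : Type u) [AddCommGroup M] [Module R M], IsSimpleModule R M →
      ∃ m, 1 ≤ m ∧ IsSyzygy (ModuleCat.of R M) m (ModuleCat.of R M)) :
    ∃ n, ∀ (M : Type u) [AddCommGroup M] [Module R M], IsSimpleModule R M →
      IsSyzygy (ModuleCat.of R M) (n + 1) (ModuleCat.of R M) := by
  obtain ⟨s, hs, hsimple, hmem⟩ := exists_finite_simple_representatives R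
  obtain ⟨n, hn⟩ := exists_common_period_of_finite hs fun S hS ↦ h S (hsimple S hS)
  refine ⟨n, fun M _ _ _ ↦ ?_⟩
  obtain ⟨S, hS, ⟨e⟩⟩ := hmem M
  exact ((hn S hS).congr_left (N := .of R M) e.symm).congr_right (N := .of R M) e.symm

theorem IsSumWithProjective.nonempty_equiv_of_isSimpleModule {S L : Type v} [AddCommGroup S]
    [Module R S] [AddCommGroup L] [Module R L] [IsSimpleModule R S]
    (h : IsSumWithProjective R S L) (hS : ¬ Module.Projective R S) : Nonempty (S ≃ₗ[R] L) := by
  obtain ⟨Z, hZ, ⟨e⟩⟩ := h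
  have hq : Function.Surjective (LinearMap.snd R L Z ∘ₗ e.toLinearMap) :=
    Prod.snd_surjective.comp e.surjective
  rcases LinearMap.injective_or_eq_zero (LinearMap.snd R L Z ∘ₗ e.toLinearMap) with hinj | hzero
  · exact absurd (.of_equiv' (LinearEquiv.ofBijective _ ⟨hinj, hq⟩).symm) hS
  · have : Subsingleton Z := by
      rw [hzero] at hq
      exact ⟨fun x y ↦ by obtain ⟨⟨_, rfl⟩, ⟨_, rfl⟩⟩ := And.intro (hq x) (hq y); rfl⟩
    have : Unique Z := uniqueOfSubsingleton 0
    exact ⟨e ≪≫ₗ LinearEquiv.prodUnique⟩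

end Simple

section

variable {R : Type u} [Ring R]

theorem IsProjShortExact.exists_retraction {L P M : Type v} [AddCommGroup L] [Module R L]
    [AddCommGroup P] [Module R P] [AddCommGroup M] [Module R M] [Module.Projective R M]
    {i : L →ₗ[R] P} {p : P →ₗ[R] M} (h : IsProjShortExact i p) :
    ∃ r : P →ₗ[R] L, r ∘ₗ i = LinearMap.id := by
  have split : Function.Injective i ∧ ∃ s, p ∘ₗ s = LinearMap.id :=
    ⟨h.injective, p.exists_rightInverse_of_surjective (LinearMap.range_eq_top.2 h.surjective)⟩
  have retract := (h.exact.split_tfae'.out 0 1).1 split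
  exact retract.2

theorem IsSyzygy.projective {K M : ModuleCat.{v} R} {n : ℕ} (h : IsSyzygy K n M)
    (hM : Module.Projective R M) : Module.Projective R K := by
  induction h with
  | of_equiv e => exact .of_equiv' e.symm
  | step hip _ ih =>
    obtain ⟨r, hr⟩ := hip.exists_retraction
    have := hip.projective
    exact ih (.of_split _ r hr)

end

section RestrictAlong

variable {R S : Type*} [Ring R] [Ring S]

/-- The `R`-module obtained from an `S`-module by restricting scalars along `f`. A synonym of its
own is needed because `f` may be an endomorphism of `R`, when both actions are by the same ring. -/
def RestrictAlong (_f : R →+* S) (M : Type v) : Type v := M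

namespace RestrictAlong

variable (f : R →+* S) {M N : Type*} [AddCommGroup M] [Module S M] [AddCommGroup N] [Module S N]

instance : AddCommGroup (RestrictAlong f M) := inferInstanceAs (AddCommGroup M)

instance : Module R (RestrictAlong f M) := Module.compHom M f

/-- The identity map from a module to its restriction of scalars. -/
def of : M ≃+ RestrictAlong f M := AddEquiv.refl M

/-- Restriction of scalars on linear maps. -/
def map (g : M →ₗ[S] N) : RestrictAlong f M →ₗ[R] RestrictAlong f N where
  toFun := g
  map_add' := g.map_add
  map_smul' r := g.map_smul (f r)

/-- Restriction of scalars on linear equivalences. -/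
def congr (e : M ≃ₗ[S] N) : RestrictAlong f M ≃ₗ[R] RestrictAlong f N :=
  { map f e.toLinearMap with
    invFun := e.symm
    left_inv := e.symm_apply_apply
    right_inv := e.apply_symm_apply }

theorem projective [Module.Projective R (RestrictAlong f S)] [Module.Projective S M] :
    Module.Projective R (RestrictAlong f M) := by
  obtain ⟨s, hs⟩ := Module.projective_def'.1 ‹Module.Projective S M›
  classical
  have : Module.Projective R (M →₀ RestrictAlong f S) := .of_equiv' (finsuppLequivDFinsupp R).symm
  have : Module.Projective R (RestrictAlong f (M →₀ S)) :=
    .of_equiv' (M := M →₀ RestrictAlong f S)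
      { AddEquiv.refl (M →₀ S) with map_smul' := fun _ _ ↦ rfl }
  exact .of_split (map f s) (map f (Finsupp.linearCombination S id))
    (LinearMap.ext fun x ↦ LinearMap.congr_fun hs x)

theorem isProjShortExact [Module.Projective R (RestrictAlong f S)] {L P M : Type v}
    [AddCommGroup L] [Module S L] [AddCommGroup P] [Module S P] [AddCommGroup M] [Module S M]
    {i : L →ₗ[S] P} {p : P →ₗ[S] M}
    (h : IsProjShortExact i p) : IsProjShortExact (map f i) (map f p) where
  projective := have := h.projective; projective f
  injective := h.injective
  exact := h.exact
  surjective := h.surjective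

theorem isSyzygy [Module.Projective R (RestrictAlong f S)] {K M : ModuleCat.{v} S} {n : ℕ}
    (h : IsSyzygy K n M) :
    IsSyzygy (.of R (RestrictAlong f K)) n (.of R (RestrictAlong f M)) := by
  induction h with
  | of_equiv e => exact .of_equiv (congr f e :)
  | @step _ _ P _ _ _ hip _ ih =>
    exact .step (P := .of R (RestrictAlong f P)) (isProjShortExact f hip) ih

end RestrictAlong

section Twist

variable {R : Type u} [Ring R] (σ : R ≃+* R)

instance : Module.Projective R (RestrictAlong (σ : R →+* R) R) :=
  .of_equiv' (M := R)
    { σ.toAddEquiv.trans (RestrictAlong.of (σ : R →+* R)) with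
      map_smul' := fun r x ↦ map_mul σ r x }

/-- The twist of a module by a ring automorphism. -/
def twist (M : ModuleCat.{v} R) : ModuleCat.{v} R := .of R (RestrictAlong (σ : R →+* R) M)

theorem isSimpleModule_twist {M : ModuleCat.{v} R} (hM : IsSimpleModule R M) :
    IsSimpleModule R (twist σ M) := by
  let l : twist σ M →ₛₗ[(σ : R →+* R)] M :=
    { (RestrictAlong.of (σ : R →+* R)).symm with map_smul' := fun _ _ ↦ rfl }
  have : RingHomSurjective (σ : R →+* R) := ⟨σ.surjective⟩
  exact (l.isSimpleModule_iff_of_bijective (AddEquiv.bijective _)).2 hM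

/-- Twisting by an automorphism and then by its inverse changes nothing. -/
def twistSymmTwistEquiv (M : ModuleCat.{v} R) : twist σ.symm (twist σ M) ≃ₗ[R] M :=
  { AddEquiv.refl M with
    map_smul' := fun r x ↦ congrArg (· • (show M from x)) (σ.apply_symm_apply r) }

variable {K M : ModuleCat.{v} R} {n : ℕ}

theorem IsSyzygy.twist (h : IsSyzygy K n M) : IsSyzygy (twist σ K) n (twist σ M) :=
  RestrictAlong.isSyzygy (σ : R →+* R) h

theorem IsSyzygy.of_twist (h : IsSyzygy (_root_.twist σ K) n (_root_.twist σ M)) :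
    IsSyzygy K n M :=
  ((h.twist σ.symm).congr_left (twistSymmTwistEquiv σ K)).congr_right (twistSymmTwistEquiv σ M)

theorem IsSyzygy.of_iterate_twist (j : ℕ)
    (h : IsSyzygy ((_root_.twist σ)^[j] K) n ((_root_.twist σ)^[j] M)) : IsSyzygy K n M := by
  induction j with
  | zero => exact h
  | succ j ih =>
    rw [Function.iterate_succ_apply', Function.iterate_succ_apply'] at h
    exact ih (h.of_twist σ)

theorem isSimpleModule_iterate_twist (hM : IsSimpleModule R M) (j : ℕ) :
    IsSimpleModule R ((twist σ)^[j] M) := by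
  induction j with
  | zero => exact hM
  | succ j ih =>
    rw [Function.iterate_succ_apply']
    exact isSimpleModule_twist σ ih

theorem isSyzygy_iterate_twist
    (h : ∀ N : ModuleCat.{v} R, IsSimpleModule R N → IsSyzygy (twist σ N) n N)
    (hM : IsSimpleModule R M) (j : ℕ) : IsSyzygy ((twist σ)^[j] M) (n * j) M := by
  induction j with
  | zero => exact .of_equiv (.refl R M)
  | succ j ih =>
    rw [Function.iterate_succ_apply', Nat.mul_succ, add_comm]
    exact (h _ (isSimpleModule_iterate_twist σ hM j)).trans ih

end Twist

theorem exists_equiv_iterate_twist {R : Type u} [Ring R] [IsArtinianRing R] (σ : R ≃+* R)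
    {M : ModuleCat.{u} R} (hM : IsSimpleModule R M) :
    ∃ d, IsSyzygy M 0 ((twist σ)^[d + 1] M) := by
  obtain ⟨s, hs, -, hmem⟩ := exists_finite_simple_representatives R
  choose S hS e using fun j ↦
    have := isSimpleModule_iterate_twist σ hM j
    hmem ((twist σ)^[j] M)
  obtain ⟨i, j, hij, heq⟩ := Set.Finite.exists_lt_map_eq_of_forall_mem (f := S) hS hs
  obtain ⟨d, rfl⟩ := Nat.exists_eq_add_of_lt hij
  refine ⟨d, IsSyzygy.of_iterate_twist σ i (.of_equiv ?_)⟩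
  rw [← Function.iterate_add_apply, ← add_assoc]
  exact (e i).some ≪≫ₗ (heq ▸ (e (i + d + 1)).some.symm)

theorem exists_period_of_twist {R : Type u} [Ring R] [IsArtinianRing R] (σ : R ≃+* R) {n : ℕ}
    (hn : 1 ≤ n) (h : ∀ N : ModuleCat.{u} R, IsSimpleModule R N → IsSyzygy (twist σ N) n N)
    {M : ModuleCat.{u} R} (hM : IsSimpleModule R M) : ∃ m, 1 ≤ m ∧ IsSyzygy M m M := by
  obtain ⟨d, hd⟩ := exists_equiv_iterate_twist σ hM
  refine ⟨n * (d + 1), Nat.mul_pos hn d.succ_pos, ?_⟩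
  simpa using hd.trans (isSyzygy_iterate_twist σ h hM (d + 1))

end RestrictAlong

section Bimodule

/-- The enveloping algebra of `B`, whose modules are the `B`-bimodules with central `k`-action. -/
abbrev Env (k B : Type*) [CommRing k] [Ring B] [Algebra k B] : Type _ := B ⊗[k] Bᵐᵒᵖ

/-- The left `B`-module underlying a bimodule. -/
abbrev LeftPart (k B : Type*) [CommRing k] [Ring B] [Algebra k B] (X : Type v) : Type v :=
  RestrictAlong (Algebra.TensorProduct.includeLeft : B →ₐ[k] Env k B).toRingHom X

/-- The right `B`-module underlying a bimodule. -/
abbrev RightPart (k B : Type*) [CommRing k] [Ring B] [Algebra k B] (X : Type v) : Type v :=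
  RestrictAlong (Algebra.TensorProduct.includeRight : Bᵐᵒᵖ →ₐ[k] Env k B).toRingHom X

instance (k B : Type*) [Field k] [Ring B] [Algebra k B] :
    Module.Projective B (LeftPart k B (Env k B)) :=
  .of_equiv' (M := B ⊗[k] Bᵐᵒᵖ)
    { RestrictAlong.of _ with
      map_smul' := fun b x ↦ congrArg (RestrictAlong.of _) (by
        change b • x = (b ⊗ₜ 1 : Env k B) * x
        induction x with
        | zero => simp
        | add x y hx hy => rw [smul_add, hx, hy, mul_add]
        | tmul x y => simp [smul_tmul']) }

instance (k B : Type*) [Field k] [Ring B] [Algebra k B] :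
    Module.Projective Bᵐᵒᵖ (RightPart k B (Env k B)) :=
  .of_equiv' (M := Bᵐᵒᵖ ⊗[k] B)
    { (Algebra.TensorProduct.comm k Bᵐᵒᵖ B).toAddEquiv.trans (RestrictAlong.of _) with
      map_smul' := fun b x ↦ congrArg (RestrictAlong.of _) (by
        change Algebra.TensorProduct.comm k Bᵐᵒᵖ B (b • x) =
          (1 ⊗ₜ b : Env k B) * Algebra.TensorProduct.comm k Bᵐᵒᵖ B x
        induction x with
        | zero => simp
        | add x y hx hy => rw [smul_add, map_add, hx, hy, map_add, mul_add]
        | tmul x y => simp [smul_tmul']) }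

variable {k B : Type*} [CommRing k] [Ring B] [Algebra k B] {X : Type v} [AddCommGroup X]
  [Module (Env k B) X]

theorem tmul_smul_eq_left_right (b : B) (c : Bᵐᵒᵖ) (x : X) :
    (b ⊗ₜ c : Env k B) • x = (b ⊗ₜ 1 : Env k B) • (1 ⊗ₜ c : Env k B) • x := by
  rw [← mul_smul, Algebra.TensorProduct.tmul_mul_tmul, mul_one, one_mul]

theorem tmul_smul_eq_right_left (b : B) (c : Bᵐᵒᵖ) (x : X) :
    (b ⊗ₜ c : Env k B) • x = (1 ⊗ₜ c : Env k B) • (b ⊗ₜ 1 : Env k B) • x := by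
  rw [← mul_smul, Algebra.TensorProduct.tmul_mul_tmul, mul_one, one_mul]

variable (k X) in
/-- Left multiplication on a bimodule, as endomorphisms of the underlying right module. -/
noncomputable def leftMul : B →+* Module.End Bᵐᵒᵖ (RightPart k B X) where
  toFun b :=
    { toFun := fun x ↦ (b ⊗ₜ 1 : Env k B) • (show X from x)
      map_add' := fun x y ↦ smul_add (b ⊗ₜ 1 : Env k B) (show X from x) y
      map_smul' := fun c x ↦ (tmul_smul_eq_left_right b c (show X from x)).symm.trans
        (tmul_smul_eq_right_left b c _) }
  map_one' := LinearMap.ext fun x ↦ one_smul (Env k B) (show X from x)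
  map_mul' b b' := LinearMap.ext fun x ↦ by
    refine Eq.trans ?_ (mul_smul (b ⊗ₜ 1 : Env k B) (b' ⊗ₜ 1) (show X from x))
    rw [Algebra.TensorProduct.tmul_mul_tmul, one_mul]
    rfl
  map_zero' := LinearMap.ext fun x ↦ by
    refine Eq.trans ?_ (zero_smul (Env k B) (show X from x))
    rw [← zero_tmul B 1]
    rfl
  map_add' b b' := LinearMap.ext fun x ↦ by
    refine Eq.trans ?_ (add_smul (b ⊗ₜ 1 : Env k B) (b' ⊗ₜ 1) (show X from x))
    rw [← add_tmul]
    rfl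

theorem leftMul_of (b : B) (x : X) :
    leftMul k X b (RestrictAlong.of _ x) = RestrictAlong.of _ ((b ⊗ₜ 1 : Env k B) • x) := rfl

variable {Y : Type*} [AddCommGroup Y] [Module (Env k B) Y]

theorem map_leftMul (f : X →ₗ[Env k B] Y) (b : B) :
    RestrictAlong.map _ f ∘ₗ leftMul k X b = leftMul k Y b ∘ₗ RestrictAlong.map _ f :=
  LinearMap.ext fun x ↦ f.map_smul (b ⊗ₜ 1 : Env k B) x

variable (k) in
/-- The right submodule `I X` of a bimodule `X`, for a right ideal `I`. -/
noncomputable def idealMul (I : Submodule Bᵐᵒᵖ B) (X : Type v) [AddCommGroup X]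
    [Module (Env k B) X] : Submodule Bᵐᵒᵖ (RightPart k B X) :=
  ⨆ b : I, LinearMap.range (leftMul k X (b : B))

variable (k) in
/-- The right module `X / I X ≅ B / I ⊗_B X`. -/
abbrev QuotTensor (I : Submodule Bᵐᵒᵖ B) (X : Type v) [AddCommGroup X] [Module (Env k B) X] :
    Type v :=
  RightPart k B X ⧸ idealMul k I X

variable {I : Submodule Bᵐᵒᵖ B}

theorem leftMul_mem_idealMul {b : B} (hb : b ∈ I) (x : RightPart k B X) :
    leftMul k X b x ∈ idealMul k I X :=
  le_iSup (fun b : I ↦ LinearMap.range (leftMul k X (b : B))) ⟨b, hb⟩ ⟨x, rfl⟩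

theorem idealMul_le_iff {N : Submodule Bᵐᵒᵖ (RightPart k B X)} :
    idealMul k I X ≤ N ↔ ∀ b ∈ I, ∀ x, leftMul k X b x ∈ N := by
  simp only [idealMul, iSup_le_iff, Subtype.forall]
  refine forall₂_congr fun b _ ↦ ⟨fun h x ↦ h ⟨x, rfl⟩, fun h ↦ ?_⟩
  rintro _ ⟨x, rfl⟩
  exact h x

theorem map_idealMul_le (f : X →ₗ[Env k B] Y) :
    idealMul k I X ≤ (idealMul k I Y).comap (RestrictAlong.map _ f) :=
  idealMul_le_iff.2 fun b hb x ↦ by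
    rw [Submodule.mem_comap, ← LinearMap.comp_apply, map_leftMul]
    exact leftMul_mem_idealMul hb _

theorem map_idealMul_of_surjective {p : X →ₗ[Env k B] Y} (hp : Function.Surjective p) :
    (idealMul k I X).map (RestrictAlong.map _ p) = idealMul k I Y := by
  have hrange : LinearMap.range (RestrictAlong.map
      (Algebra.TensorProduct.includeRight : Bᵐᵒᵖ →ₐ[k] Env k B).toRingHom p) = ⊤ :=
    LinearMap.range_eq_top.2 hp
  simp only [idealMul, Submodule.map_iSup, ← LinearMap.range_comp, map_leftMul,
    LinearMap.range_comp_of_range_eq_top _ hrange]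

theorem leftLinear_mem_idealMul (r : LeftPart k B X →ₗ[B] LeftPart k B Y) {x : RightPart k B X}
    (hx : x ∈ idealMul k I X) : (r x : RightPart k B Y) ∈ idealMul k I Y := by
  induction hx using Submodule.iSup_induction' with
  | mem b x hx =>
    obtain ⟨y, rfl⟩ := hx
    exact (r.map_smul (b : B) y) ▸ leftMul_mem_idealMul b.2 (r y : RightPart k B Y)
  | zero => exact (r.map_zero) ▸ Submodule.zero_mem _
  | add x y _ _ hx hy => exact (r.map_add x y) ▸ Submodule.add_mem _ hx hy

namespace QuotTensor

variable (I)

/-- The functor `B / I ⊗_B -` on morphisms. -/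
noncomputable def map (f : X →ₗ[Env k B] Y) : QuotTensor k I X →ₗ[Bᵐᵒᵖ] QuotTensor k I Y :=
  (idealMul k I X).mapQ (idealMul k I Y) (RestrictAlong.map _ f) (map_idealMul_le f)

theorem map_mkQ (f : X →ₗ[Env k B] Y) (x : RightPart k B X) :
    map I f ((idealMul k I X).mkQ x) = (idealMul k I Y).mkQ (RestrictAlong.map _ f x) := rfl

/-- The functor `B / I ⊗_B -` on isomorphisms. -/
noncomputable def congr (e : X ≃ₗ[Env k B] Y) : QuotTensor k I X ≃ₗ[Bᵐᵒᵖ] QuotTensor k I Y :=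
  Submodule.Quotient.equiv _ _ (RestrictAlong.congr _ e) (map_idealMul_of_surjective e.surjective)

variable {I}

theorem map_surjective {p : X →ₗ[Env k B] Y} (hp : Function.Surjective p) :
    Function.Surjective (map I p) := by
  intro y
  obtain ⟨y, rfl⟩ := (idealMul k I Y).mkQ_surjective y
  obtain ⟨x, rfl⟩ := hp y
  exact ⟨(idealMul k I X).mkQ (RestrictAlong.of _ x), rfl⟩

theorem exists_eq_mkQ_of_map_eq_zero {p : X →ₗ[Env k B] Y} (hp : Function.Surjective p)
    {z : QuotTensor k I X} (hz : map I p z = 0) :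
    ∃ x : X, p x = 0 ∧ z = (idealMul k I X).mkQ (RestrictAlong.of _ x) := by
  obtain ⟨x, rfl⟩ := (idealMul k I X).mkQ_surjective z
  rw [map_mkQ, Submodule.mkQ_apply, Submodule.Quotient.mk_eq_zero,
    ← map_idealMul_of_surjective hp] at hz
  obtain ⟨y, hy, hyx⟩ := hz
  refine ⟨(x - y : RightPart k B X), ?_, ?_⟩
  · exact (p.map_sub x y).trans (sub_eq_zero.2 hyx.symm)
  · exact (Submodule.Quotient.eq _).2 (by
      change x - (x - y) ∈ _
      rwa [sub_sub_cancel])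

theorem map_exact {Z : Type*} [AddCommGroup Z] [Module (Env k B) Z] {i : Z →ₗ[Env k B] X}
    {p : X →ₗ[Env k B] Y} (hp : Function.Surjective p) (h : Function.Exact i p) :
    Function.Exact (map I i) (map I p) := by
  refine fun z ↦ ⟨fun hz ↦ ?_, ?_⟩
  · obtain ⟨x, hx, rfl⟩ := exists_eq_mkQ_of_map_eq_zero hp hz
    obtain ⟨y, rfl⟩ := (h x).1 hx
    exact ⟨(idealMul k I Z).mkQ (RestrictAlong.of _ y), rfl⟩
  · rintro ⟨y, rfl⟩
    obtain ⟨y, rfl⟩ := (idealMul k I Z).mkQ_surjective y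
    rw [map_mkQ, map_mkQ]
    exact (congrArg (idealMul k I Y).mkQ (h.apply_apply_eq_zero y)).trans (map_zero _)

theorem map_injective {i : X →ₗ[Env k B] Y} {r : LeftPart k B Y →ₗ[B] LeftPart k B X}
    (hr : r ∘ₗ RestrictAlong.map _ i = LinearMap.id) : Function.Injective (map I i) := by
  rw [injective_iff_map_eq_zero]
  intro x hx
  obtain ⟨x, rfl⟩ := (idealMul k I X).mkQ_surjective x
  rw [map_mkQ, Submodule.mkQ_apply, Submodule.Quotient.mk_eq_zero] at hx
  refine (Submodule.Quotient.mk_eq_zero _).2 ?_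
  have hrx : r (RestrictAlong.map _ i x) = x := LinearMap.congr_fun hr x
  exact hrx ▸ leftLinear_mem_idealMul r hx

end QuotTensor

end Bimodule

section QuotTensorProjective

/-- The right submodule `I X` is a direct summand of the bimodule `X`: it is the kernel of an
idempotent right linear map `ρ`. -/
def IdealMulSplits (k : Type*) {B : Type*} [Field k] [Ring B] [Algebra k B]
    (I : Submodule Bᵐᵒᵖ B) (X : Type*) [AddCommGroup X] [Module (Env k B) X] : Prop :=
  ∃ ρ : Module.End Bᵐᵒᵖ (RightPart k B X),
    idealMul k I X ≤ LinearMap.ker ρ ∧ ∀ x, x - ρ x ∈ idealMul k I X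

variable {k B : Type*} [Field k] [Ring B] [Algebra k B] {X Y : Type*} [AddCommGroup X]
  [Module (Env k B) X] [AddCommGroup Y] [Module (Env k B) Y] (I : Submodule Bᵐᵒᵖ B)

theorem IdealMulSplits.projective (h : IdealMulSplits k I X) [Module.Projective (Env k B) X] :
    Module.Projective Bᵐᵒᵖ (QuotTensor k I X) := by
  obtain ⟨ρ, hker, hρ⟩ := h
  have : Module.Projective Bᵐᵒᵖ (RightPart k B X) := RestrictAlong.projective _
  refine .of_split ((idealMul k I X).liftQ ρ hker) (idealMul k I X).mkQ (LinearMap.ext fun x ↦ ?_)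
  obtain ⟨x, rfl⟩ := (idealMul k I X).mkQ_surjective x
  exact ((Submodule.Quotient.eq _).2 (hρ x)).symm

theorem exists_linear_projection_along :
    ∃ π : B →ₗ[k] B, (∀ b ∈ I, π b = 0) ∧ ∀ b, b - π b ∈ I := by
  have : IsScalarTower k Bᵐᵒᵖ B := ⟨fun a b c ↦ by simp [MulOpposite.smul_eq_mul_unop]⟩
  obtain ⟨s, hs⟩ := (I.restrictScalars k).mkQ.exists_rightInverse_of_surjective
    (Submodule.range_mkQ _)
  refine ⟨s ∘ₗ (I.restrictScalars k).mkQ, fun b hb ↦ ?_, fun b ↦ ?_⟩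
  · have hb0 : (I.restrictScalars k).mkQ b = 0 := (Submodule.Quotient.mk_eq_zero _).2 hb
    rw [LinearMap.comp_apply, hb0, map_zero]
  · exact (Submodule.Quotient.eq (I.restrictScalars k)).1
      (LinearMap.congr_fun hs ((I.restrictScalars k).mkQ b)).symm

theorem idealMulSplits_env : IdealMulSplits k I (Env k B) := by
  obtain ⟨π, hker, hπ⟩ := exists_linear_projection_along (k := k) I
  let ρ : Module.End Bᵐᵒᵖ (RightPart k B (Env k B)) :=
    { toFun := π.rTensor Bᵐᵒᵖ
      map_add' := map_add (π.rTensor Bᵐᵒᵖ)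
      map_smul' := fun c (x : Env k B) ↦ by
        change π.rTensor Bᵐᵒᵖ ((1 ⊗ₜ c : Env k B) * x) = (1 ⊗ₜ c : Env k B) * π.rTensor Bᵐᵒᵖ x
        induction x using TensorProduct.induction_on with
        | zero => simp
        | add x y hx hy => rw [mul_add, map_add, hx, hy, map_add, mul_add]
        | tmul x y => simp }
  refine ⟨ρ, idealMul_le_iff.2 fun b hb (x : Env k B) ↦ ?_, fun x ↦ ?_⟩
  · change π.rTensor Bᵐᵒᵖ ((b ⊗ₜ 1 : Env k B) * x) = 0
    induction x using TensorProduct.induction_on with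
    | zero => simp
    | add x y hx hy => rw [mul_add, map_add, hx, hy, add_zero]
    | tmul x y =>
      rw [Algebra.TensorProduct.tmul_mul_tmul, LinearMap.rTensor_tmul,
        hker (b * x) (I.smul_mem (MulOpposite.op x) hb), zero_tmul]
  · change x ∈ (idealMul k I (Env k B)).comap (1 - ρ)
    induction x using TensorProduct.induction_on with
    | zero => exact Submodule.zero_mem _
    | add x y hx hy => exact Submodule.add_mem _ hx hy
    | tmul x y =>
      have hmul : leftMul k (Env k B) (x - π x) (RestrictAlong.of _ (1 ⊗ₜ y)) =
          (1 - ρ) (RestrictAlong.of _ (x ⊗ₜ y)) := by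
        change ((x - π x) ⊗ₜ 1 : Env k B) * 1 ⊗ₜ y = x ⊗ₜ y - π x ⊗ₜ y
        rw [Algebra.TensorProduct.tmul_mul_tmul, mul_one, one_mul, sub_tmul]
      exact Submodule.mem_comap.2 (hmul ▸ leftMul_mem_idealMul (hπ x) _)

variable {I}

theorem IdealMulSplits.finsupp (h : IdealMulSplits k I X) (ι : Type*) :
    IdealMulSplits k I (ι →₀ X) := by
  obtain ⟨ρ, hker, hρ⟩ := h
  let ρ' : Module.End Bᵐᵒᵖ (RightPart k B (ι →₀ X)) :=
    { toFun := fun x : ι →₀ RightPart k B X ↦ Finsupp.mapRange ρ (map_zero ρ) x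
      map_add' := Finsupp.mapRange_add (map_add ρ)
      map_smul' := fun c (x : ι →₀ X) ↦ Finsupp.ext fun i ↦ ρ.map_smul c (x i) }
  refine ⟨ρ', idealMul_le_iff.2 fun b hb (x : ι →₀ X) ↦ Finsupp.ext fun i ↦ ?_, fun x ↦ ?_⟩
  · exact hker (leftMul_mem_idealMul hb (RestrictAlong.of _ (x i)))
  · change x ∈ (idealMul k I (ι →₀ X)).comap (1 - ρ')
    induction x using Finsupp.induction_linear with
    | zero => exact Submodule.zero_mem _
    | add x y hx hy => exact Submodule.add_mem _ hx hy
    | single i x =>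
      have hsingle : RestrictAlong.map _ (Finsupp.lsingle i) (RestrictAlong.of _ x - ρ x) =
          (1 - ρ') (RestrictAlong.of _ (Finsupp.single i x)) := by
        have hρ' : ρ' (RestrictAlong.of _ (Finsupp.single i x)) =
            RestrictAlong.map _ (Finsupp.lsingle i) (ρ x) :=
          Finsupp.mapRange_single (hf := map_zero ρ)
        rw [map_sub, LinearMap.sub_apply, hρ']
        rfl
      exact Submodule.mem_comap.2 (hsingle ▸ map_idealMul_le (Finsupp.lsingle i) (hρ x))

theorem IdealMulSplits.of_retract (h : IdealMulSplits k I Y) {s : X →ₗ[Env k B] Y}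
    {r : Y →ₗ[Env k B] X} (hrs : r ∘ₗ s = LinearMap.id) : IdealMulSplits k I X := by
  obtain ⟨ρ, hker, hρ⟩ := h
  refine ⟨RestrictAlong.map _ r ∘ₗ ρ ∘ₗ RestrictAlong.map _ s, fun x hx ↦ ?_, fun x ↦ ?_⟩
  · exact (congrArg r (hker (map_idealMul_le s hx))).trans (map_zero r)
  · have hx : RestrictAlong.map _ r (RestrictAlong.map _ s x) = x := LinearMap.congr_fun hrs x
    have hmem := map_idealMul_le r (hρ (RestrictAlong.map _ s x))
    rwa [Submodule.mem_comap, map_sub, hx] at hmem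

variable (I X) in
theorem QuotTensor.projective [Module.Projective (Env k B) X] :
    Module.Projective Bᵐᵒᵖ (QuotTensor k I X) := by
  obtain ⟨s, hs⟩ := Module.projective_def'.1 ‹Module.Projective (Env k B) X›
  exact (((idealMulSplits_env I).finsupp X).of_retract hs).projective

end QuotTensorProjective

section QuotTensorSyzygy

variable {k B : Type*} [Field k] [Ring B] [Algebra k B] {L P M : Type v} [AddCommGroup L]
  [Module (Env k B) L] [AddCommGroup P] [Module (Env k B) P] [AddCommGroup M] [Module (Env k B) M]
  {I : Submodule Bᵐᵒᵖ B}

theorem QuotTensor.isProjShortExact {i : L →ₗ[Env k B] P} {p : P →ₗ[Env k B] M}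
    (h : IsProjShortExact i p) [Module.Projective B (LeftPart k B M)] :
    IsProjShortExact (QuotTensor.map I i) (QuotTensor.map I p) :=
  have := h.projective
  have ⟨_, hr⟩ := (RestrictAlong.isProjShortExact _ h).exists_retraction
  ⟨projective P I, map_injective hr, map_exact h.surjective h.exact,
    map_surjective h.surjective⟩

theorem IsProjShortExact.projective_leftPart {i : L →ₗ[Env k B] P} {p : P →ₗ[Env k B] M}
    (h : IsProjShortExact i p) [Module.Projective B (LeftPart k B M)] :
    Module.Projective B (LeftPart k B L) :=
  have hres := RestrictAlong.isProjShortExact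
    (Algebra.TensorProduct.includeLeft : B →ₐ[k] Env k B).toRingHom h
  have := hres.projective
  have ⟨r, hr⟩ := hres.exists_retraction
  .of_split _ r hr

theorem IsSyzygy.quotTensor {K M : ModuleCat.{v} (Env k B)} {n : ℕ} (h : IsSyzygy K n M)
    (hM : Module.Projective B (LeftPart k B M)) (I : Submodule Bᵐᵒᵖ B) :
    IsSyzygy (.of Bᵐᵒᵖ (QuotTensor k I K)) n (.of Bᵐᵒᵖ (QuotTensor k I M)) := by
  induction h with
  | of_equiv e => exact .of_equiv (QuotTensor.congr I e :)
  | @step _ _ P _ _ _ hip _ ih =>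
    exact .step (P := .of Bᵐᵒᵖ (QuotTensor k I P)) (QuotTensor.isProjShortExact hip)
      (ih hip.projective_leftPart)

/-- The radical of the enveloping algebra is at most `B ⊗ rad Bᵐᵒᵖ + rad B ⊗ Bᵐᵒᵖ`. -/
def EnvRadicalLe (k B : Type*) [Field k] [Ring B] [Algebra k B] : Prop :=
  (Ring.jacobson (Env k B)).restrictScalars k ≤
    LinearMap.range (((Ring.jacobson Bᵐᵒᵖ).restrictScalars k).subtype.lTensor B) ⊔
      LinearMap.range (((Ring.jacobson B).restrictScalars k).subtype.rTensor Bᵐᵒᵖ)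

theorem mkQ_tmul_smul_mem_jacobson_smul_top (b : B) {c : Bᵐᵒᵖ} (hc : c ∈ Ring.jacobson Bᵐᵒᵖ)
    (x : P) : (idealMul k I P).mkQ (RestrictAlong.of _ ((b ⊗ₜ c : Env k B) • x)) ∈
      Ring.jacobson Bᵐᵒᵖ • (⊤ : Submodule Bᵐᵒᵖ (QuotTensor k I P)) := by
  have hsmul : RestrictAlong.of _ ((b ⊗ₜ c : Env k B) • x) =
      c • leftMul k P b (RestrictAlong.of _ x) :=
    congrArg _ (tmul_smul_eq_right_left b c x)
  rw [hsmul, map_smul]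
  exact Submodule.smul_mem_smul hc Submodule.mem_top

theorem mkQ_tmul_smul_eq_zero {b : B} (hb : b ∈ I) (c : Bᵐᵒᵖ) (x : P) :
    (idealMul k I P).mkQ (RestrictAlong.of _ ((b ⊗ₜ c : Env k B) • x)) = 0 := by
  rw [tmul_smul_eq_left_right, ← leftMul_of]
  exact (Submodule.Quotient.mk_eq_zero _).2 (leftMul_mem_idealMul hb _)

theorem mkQ_smul_mem_jacobson_smul_top (hrad : EnvRadicalLe k B)
    (hI : ∀ b ∈ Ring.jacobson B, b ∈ I) {a : Env k B} (ha : a ∈ Ring.jacobson (Env k B)) (x : P) :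
    (idealMul k I P).mkQ (RestrictAlong.of _ (a • x)) ∈
      Ring.jacobson Bᵐᵒᵖ • (⊤ : Submodule Bᵐᵒᵖ (QuotTensor k I P)) := by
  let toQuot : Env k B →+ QuotTensor k I P :=
    (idealMul k I P).mkQ.toAddMonoidHom.comp
      ((RestrictAlong.of _).toAddMonoidHom.comp ((smulAddHom (Env k B) P).flip x))
  obtain ⟨_, ⟨y, rfl⟩, _, ⟨z, rfl⟩, rfl⟩ := Submodule.mem_sup.1 (hrad ha)
  change toQuot (_ + _) ∈ _
  clear ha
  rw [map_add]
  refine Submodule.add_mem _ ?_ ?_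
  · induction y with
    | zero => simp
    | add y y' hy hy' =>
      rw [map_add, map_add]
      exact Submodule.add_mem _ hy hy'
    | tmul b c => exact mkQ_tmul_smul_mem_jacobson_smul_top b c.2 x
  · induction z with
    | zero => simp
    | add z z' hz hz' =>
      rw [map_add, map_add]
      exact Submodule.add_mem _ hz hz'
    | tmul b c =>
      have hzero : toQuot (b ⊗ₜ c) = 0 := mkQ_tmul_smul_eq_zero (hI b b.2) c x
      exact hzero ▸ Submodule.zero_mem _

theorem HasRadicalKernel.quotTensor (hrad : EnvRadicalLe k B)
    (hI : ∀ b ∈ Ring.jacobson B, b ∈ I) {p : P →ₗ[Env k B] M} (hp : HasRadicalKernel p)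
    (hsurj : Function.Surjective p) : HasRadicalKernel (QuotTensor.map I p) := by
  intro z hz
  obtain ⟨x, hx, rfl⟩ := QuotTensor.exists_eq_mkQ_of_map_eq_zero hsurj hz
  refine Submodule.smul_induction_on (hp hx)
    (fun a ha x _ ↦ mkQ_smul_mem_jacobson_smul_top hrad hI ha x) fun x y hx hy ↦ ?_
  rw [map_add, map_add]
  exact Submodule.add_mem _ hx hy

theorem IsMinimalSyzygy.quotTensor (hrad : EnvRadicalLe k B)
    (hI : ∀ b ∈ Ring.jacobson B, b ∈ I) {K M : ModuleCat.{v} (Env k B)} {n : ℕ}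
    (h : IsMinimalSyzygy K n M) (hM : Module.Projective B (LeftPart k B M)) :
    IsMinimalSyzygy (.of Bᵐᵒᵖ (QuotTensor k I K)) n (.of Bᵐᵒᵖ (QuotTensor k I M)) := by
  induction h with
  | of_equiv e => exact .of_equiv (QuotTensor.congr I e :)
  | @step _ _ P _ _ _ hip hp _ ih =>
    exact .step (P := .of Bᵐᵒᵖ (QuotTensor k I P)) (QuotTensor.isProjShortExact hip)
      (hp.quotTensor hrad hI hip.surjective) (ih hip.projective_leftPart)

end QuotTensorSyzygy

section Separable

theorem eq_zero_of_forall_mul_mul_eq_zero {R : Type*} [Ring R] [IsSemisimpleRing R] {x : R}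
    (hx : ∀ y, x * y * x = 0) : x = 0 := by
  rw [← Submodule.mem_bot R, ← IsSemisimpleRing.jacobson_eq_bot R, ← Ideal.jacobson_bot,
    Ideal.mem_jacobson_iff]
  refine fun y ↦ ⟨1 - y * x, ?_⟩
  calc (1 - y * x) * y * x + (1 - y * x) - 1 = -(y * (x * y * x)) := by noncomm_ring
    _ = 0 := by rw [hx, mul_zero, neg_zero]

theorem jacobson_eq_bot_of_semiprime {R : Type*} [Ring R] [IsSemiprimaryRing R]
    (h : ∀ x : R, (∀ y, x * y * x = 0) → x = 0) : Ring.jacobson R = ⊥ := by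
  have key (n : ℕ) : Ring.jacobson R ^ (n + 1) = ⊥ → Ring.jacobson R = ⊥ := by
    induction n with
    | zero => exact fun hn ↦ by rwa [zero_add, Submodule.pow_one] at hn
    | succ n ih =>
      refine fun hn ↦ ih (eq_bot_iff.2 fun x hx ↦ h x fun y ↦ ?_)
      have hyx : y * x ∈ Ring.jacobson R := by
        refine Ideal.mul_mem_left _ y (?_ : x ∈ Ring.jacobson R)
        exact Ideal.pow_le_self (Nat.succ_ne_zero n) hx
      rw [mul_assoc, ← Submodule.mem_bot R, ← hn, Submodule.pow_succ (n := n + 1)]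
      exact Ideal.mul_mem_mul hx hyx
  obtain ⟨n, hn⟩ := IsSemiprimaryRing.isNilpotent (R := R)
  exact key n (by rw [Submodule.pow_succ, hn]; exact zero_mul _)

theorem isSemisimpleRing_of_baseChange {k : Type*} (K : Type*) {R : Type*} [Field k] [Field K]
    [Algebra k K] [Ring R] [Algebra k R] [IsArtinianRing R] [IsSemisimpleRing (K ⊗[k] R)] :
    IsSemisimpleRing R := by
  refine IsArtinianRing.isSemisimpleRing_iff_jacobson.2
    (jacobson_eq_bot_of_semiprime fun x hx ↦ ?_)
  have hinj : Function.Injective (Algebra.TensorProduct.includeRight : R →ₐ[k] K ⊗[k] R) :=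
    Algebra.TensorProduct.includeRight_injective (algebraMap k K).injective
  refine hinj ((eq_zero_of_forall_mul_mul_eq_zero fun y ↦ ?_).trans (map_zero _).symm)
  induction y with
  | zero => simp
  | add y y' hy hy' => rw [mul_add, add_mul, hy, hy', add_zero]
  | tmul a y => simp [hx]

variable {k K S : Type*} [Field k] [Field K] [Algebra k K] [Ring S] [Algebra k S]

theorem isSemisimpleRing_tensor_matrix [IsSemisimpleRing (S ⊗[k] K)] (n : Type*) [Fintype n]
    [DecidableEq n] : IsSemisimpleRing (S ⊗[k] Matrix n n K) :=
  let e := (Algebra.TensorProduct.congr .refl (matrixEquivTensor n k K)).trans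
    ((Algebra.TensorProduct.assoc k k k S K (Matrix n n k)).symm.trans
      (matrixEquivTensor n k (S ⊗[k] K)).symm)
  e.symm.toRingEquiv.isSemisimpleRing

theorem isSemisimpleRing_mulOpposite_tensor [IsSemisimpleRing (K ⊗[k] S)] :
    IsSemisimpleRing (Sᵐᵒᵖ ⊗[k] K) :=
  let e := (Algebra.TensorProduct.comm k Sᵐᵒᵖ K).trans
    ((Algebra.TensorProduct.congr (AlgEquiv.toOpposite k K) .refl).trans
      (Algebra.TensorProduct.opAlgEquiv k k K S))
  e.symm.toRingEquiv.isSemisimpleRing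

theorem isSemisimpleRing_env_of_isAlgClosed [FiniteDimensional k S] [IsAlgClosed K]
    [IsSemisimpleRing (K ⊗[k] S)] : IsSemisimpleRing (Env k S) := by
  obtain ⟨m, d, _, ⟨e⟩⟩ := IsSemisimpleRing.exists_algEquiv_pi_matrix_of_isAlgClosed K (K ⊗[k] S)
  have := isSemisimpleRing_mulOpposite_tensor (k := k) (K := K) (S := S)
  have hblock (i) := isSemisimpleRing_tensor_matrix (k := k) (K := K) (S := Sᵐᵒᵖ) (Fin (d i))
  let e' : K ⊗[k] Env k S ≃ₐ[k] Π i, Sᵐᵒᵖ ⊗[k] Matrix (Fin (d i)) (Fin (d i)) K :=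
    (Algebra.TensorProduct.assoc k k k K S Sᵐᵒᵖ).symm.trans
      ((Algebra.TensorProduct.comm k (K ⊗[k] S) Sᵐᵒᵖ).trans
        ((Algebra.TensorProduct.congr .refl (e.restrictScalars k)).trans
          (Algebra.TensorProduct.piRight k k Sᵐᵒᵖ _)))
  have : IsSemisimpleRing (K ⊗[k] Env k S) := e'.symm.toRingEquiv.isSemisimpleRing
  have : IsArtinianRing (Env k S) := .of_finite k _
  exact isSemisimpleRing_of_baseChange (k := k) K

theorem op_mem_jacobson {R : Type*} [Ring R] [IsSemiprimaryRing Rᵐᵒᵖ] {x : R}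
    (hx : x ∈ Ring.jacobson R) : MulOpposite.op x ∈ Ring.jacobson Rᵐᵒᵖ := by
  let f : R →+* (Rᵐᵒᵖ ⧸ Ring.jacobson Rᵐᵒᵖ)ᵐᵒᵖ :=
    (RingHom.op (Ideal.Quotient.mk (Ring.jacobson Rᵐᵒᵖ))).comp (RingEquiv.opOp R).toRingHom
  have hf : Function.Surjective f :=
    (MulOpposite.op_surjective.comp ((Ideal.Quotient.mk_surjective (I := Ring.jacobson Rᵐᵒᵖ)).comp
      MulOpposite.op_surjective) :)
  have : RingHomSurjective f := ⟨hf⟩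
  have hfx : f x ∈ Ring.jacobson (Rᵐᵒᵖ ⧸ Ring.jacobson Rᵐᵒᵖ)ᵐᵒᵖ := Ring.le_comap_jacobson f hx
  have hbot : Ring.jacobson (Rᵐᵒᵖ ⧸ Ring.jacobson Rᵐᵒᵖ)ᵐᵒᵖ = ⊥ := IsSemisimpleRing.jacobson_eq_bot _
  rw [hbot, Submodule.mem_bot] at hfx
  exact Ideal.Quotient.eq_zero_iff_mem.1 (MulOpposite.op_injective hfx)

theorem jacobson_le_of_isSimpleModule_quotient {R : Type*} [Ring R] [IsSemiprimaryRing Rᵐᵒᵖ]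
    (I : Submodule Rᵐᵒᵖ R) [IsSimpleModule Rᵐᵒᵖ (R ⧸ I)] : ∀ x ∈ Ring.jacobson R, x ∈ I := by
  intro x hx
  have hann := IsSemisimpleModule.jacobson_le_annihilator Rᵐᵒᵖ (R ⧸ I) (op_mem_jacobson hx)
  have hx1 : I.mkQ (MulOpposite.op x • 1) = 0 := Module.mem_annihilator.1 hann (I.mkQ 1)
  rwa [Submodule.mkQ_apply, Submodule.Quotient.mk_eq_zero, op_smul_eq_mul, one_mul] at hx1

theorem range_lTensor_subtype_mono {k : Type*} [CommRing k] (M : Type*) {N : Type*}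
    [AddCommGroup M] [Module k M] [AddCommGroup N] [Module k N] {p q : Submodule k N} (h : p ≤ q) :
    LinearMap.range (LinearMap.lTensor M p.subtype) ≤
      LinearMap.range (LinearMap.lTensor M q.subtype) := by
  rw [← Submodule.subtype_comp_inclusion p q h, LinearMap.lTensor_comp]
  exact LinearMap.range_comp_le_range _ _

theorem envRadicalLe_of_isSemisimpleRing {B : Type*} [Ring B] [Algebra k B]
    [IsSemiprimaryRing Bᵐᵒᵖ] {π : B →ₐ[k] S} (hπ : Function.Surjective π)
    (hker : RingHom.ker π = Ring.jacobson B) [IsSemisimpleRing (Env k S)] : EnvRadicalLe k B := by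
  have hπ' : Function.Surjective (AlgHom.op π) :=
    (MulOpposite.op_surjective.comp (hπ.comp MulOpposite.unop_surjective) :)
  let F : Env k B →ₐ[k] Env k S := Algebra.TensorProduct.map π (AlgHom.op π)
  have : RingHomSurjective F.toRingHom := ⟨TensorProduct.map_surjective hπ hπ'⟩
  have hexact : Function.Exact ((Ring.jacobson B).restrictScalars k).subtype π.toLinearMap := by
    rw [LinearMap.exact_iff, Submodule.range_subtype, ← hker]
    rfl
  have hexact' : Function.Exact (LinearMap.ker (AlgHom.op π).toLinearMap).subtype
      (AlgHom.op π).toLinearMap := LinearMap.exact_subtype_ker_map _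
  have hle : LinearMap.ker (AlgHom.op π).toLinearMap ≤
      (Ring.jacobson Bᵐᵒᵖ).restrictScalars k := by
    intro c hc
    have hcπ : c.unop ∈ RingHom.ker π := congrArg MulOpposite.unop hc
    exact op_mem_jacobson (hker ▸ hcπ)
  intro a ha
  have hFa : F a ∈ Ring.jacobson (Env k S) := Ring.le_comap_jacobson F.toRingHom ha
  rw [IsSemisimpleRing.jacobson_eq_bot, Submodule.mem_bot] at hFa
  have hmap := TensorProduct.map_ker hexact hπ hexact' hπ'
  exact sup_le_sup_right (range_lTensor_subtype_mono B hle) _ (hmap.le hFa)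

theorem envRadicalLe_of_baseChange {B : Type*} [Ring B] [Algebra k B] [FiniteDimensional k B]
    [IsAlgClosed K] [IsSemisimpleRing (K ⊗[k] (B ⧸ Ring.jacobson B))] : EnvRadicalLe k B := by
  have : IsArtinianRing Bᵐᵒᵖ := .of_finite k _
  have := isSemisimpleRing_env_of_isAlgClosed (k := k) (K := K) (S := B ⧸ Ring.jacobson B)
  exact envRadicalLe_of_isSemisimpleRing (Ideal.Quotient.mkₐ_surjective k (Ring.jacobson B))
    (Ideal.Quotient.mkₐ_ker k _)

end Separable

section RightRegular

variable (B : Type u) [Ring B]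

/-- The regular right module, as a module over the opposite ring acting by right multiplication or
by its own left multiplication. -/
def opSelfEquiv : Bᵐᵒᵖ ≃ₗ[Bᵐᵒᵖ] B :=
  { MulOpposite.opAddEquiv.symm with map_smul' := fun _ _ ↦ rfl }

instance : Module.Projective Bᵐᵒᵖ B := .of_equiv' (opSelfEquiv B)

variable {B} in
theorem exists_quotient_equiv_of_isSimpleModule (M : Type*) [AddCommGroup M] [Module Bᵐᵒᵖ M]
    [IsSimpleModule Bᵐᵒᵖ M] : ∃ I : Submodule Bᵐᵒᵖ B, Nonempty ((B ⧸ I) ≃ₗ[Bᵐᵒᵖ] M) := by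
  have := IsSimpleModule.nontrivial Bᵐᵒᵖ M
  obtain ⟨m, hm⟩ := exists_ne (0 : M)
  let f : B →ₗ[Bᵐᵒᵖ] M := LinearMap.toSpanSingleton Bᵐᵒᵖ M m ∘ₗ (opSelfEquiv B).symm
  have hf : Function.Surjective f :=
    (IsSimpleModule.toSpanSingleton_surjective Bᵐᵒᵖ hm).comp (opSelfEquiv B).symm.surjective
  exact ⟨LinearMap.ker f, ⟨f.quotKerEquivOfSurjective hf⟩⟩

end RightRegular

section TwistedBimodule

variable {k B : Type} [Field k] [Ring B] [Algebra k B]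

/-- The identity map from `B` to the twisted bimodule on `B`. -/
noncomputable def twistedBimodule.of (φ : B ≃ₐ[k] B) : B ≃+ twistedBimodule k B φ := AddEquiv.refl B

theorem twistedBimodule.smul_of (φ : B ≃ₐ[k] B) (b : B) (c : Bᵐᵒᵖ) (x : B) :
    (b ⊗ₜ c : Env k B) • of φ x = of φ (b * x * φ c.unop) := by
  let _ : Module (B ⊗[k] Bᵐᵒᵖ) B := TensorProduct.Algebra.module
  change ((b ⊗ₜ MulOpposite.op (φ c.unop) : Env k B) • x : B) = b * x * φ c.unop
  rw [TensorProduct.Algebra.smul_def, op_smul_eq_mul, smul_eq_mul, mul_assoc]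

/-- The regular bimodule is the bimodule twisted by the identity. -/
noncomputable def twistedBimodule.reflEquiv :
    twistedBimodule k B .refl ≃ₗ[Env k B] regularBimodule k B :=
  { AddEquiv.refl B with
    map_smul' := fun a x ↦ by
      let _ : Module (B ⊗[k] Bᵐᵒᵖ) B := TensorProduct.Algebra.module
      change Algebra.TensorProduct.map (.id k B) (AlgHom.id k Bᵐᵒᵖ) a • (show B from x) =
        a • (show B from x)
      rw [Algebra.TensorProduct.map_id]
      rfl }

/-- The left module underlying `₁B_φ` is the regular one. -/
noncomputable def twistedBimodule.leftPartEquiv (φ : B ≃ₐ[k] B) :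
    B ≃ₗ[B] LeftPart k B (twistedBimodule k B φ) :=
  { (of φ).trans (RestrictAlong.of _) with
    map_smul' := fun b x ↦ congrArg (RestrictAlong.of _) (by
      refine Eq.trans ?_ (smul_of φ b 1 x).symm
      rw [MulOpposite.unop_one, map_one, mul_one]
      rfl) }

/-- The right module underlying `₁B_φ` is the twist of the regular one. -/
noncomputable def twistedBimodule.rightPartEquiv (φ : B ≃ₐ[k] B) :
    RestrictAlong ((AlgEquiv.op φ).toRingEquiv : Bᵐᵒᵖ →+* Bᵐᵒᵖ) B ≃ₗ[Bᵐᵒᵖ]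
      RightPart k B (twistedBimodule k B φ) :=
  { (RestrictAlong.of _).symm.trans ((of φ).trans (RestrictAlong.of _)) with
    map_smul' := fun c (x : B) ↦ congrArg (RestrictAlong.of _) (by
      refine Eq.trans ?_ (smul_of φ 1 c x).symm
      rw [one_mul]
      rfl) }

theorem twistedBimodule.leftMul_rightPartEquiv (φ : B ≃ₐ[k] B) (b x : B) :
    leftMul k (twistedBimodule k B φ) b (rightPartEquiv φ (RestrictAlong.of _ x)) =
      rightPartEquiv φ (RestrictAlong.of _ (b * x)) :=
  ((leftPartEquiv φ).map_smul b x).symm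

theorem twistedBimodule.idealMul_eq (I : Submodule Bᵐᵒᵖ B) (φ : B ≃ₐ[k] B) :
    idealMul k I (twistedBimodule k B φ) =
      LinearMap.ker (RestrictAlong.map _ I.mkQ ∘ₗ (rightPartEquiv φ).symm.toLinearMap) := by
  have hmem (x : B) : rightPartEquiv φ (RestrictAlong.of _ x) ∈
      LinearMap.ker (RestrictAlong.map _ I.mkQ ∘ₗ (rightPartEquiv φ).symm.toLinearMap) ↔ x ∈ I := by
    rw [LinearMap.mem_ker, LinearMap.comp_apply, LinearEquiv.coe_coe, LinearEquiv.symm_apply_apply]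
    exact Submodule.Quotient.mk_eq_zero I
  refine le_antisymm (idealMul_le_iff.2 fun b hb y ↦ ?_) fun y hy ↦ ?_ <;>
    obtain ⟨x, rfl⟩ := (rightPartEquiv φ).surjective y <;>
    obtain ⟨x, rfl⟩ := (RestrictAlong.of _).surjective x
  · rw [leftMul_rightPartEquiv, hmem]
    exact I.smul_mem (MulOpposite.op x) hb
  · rw [← mul_one x, ← leftMul_rightPartEquiv]
    exact leftMul_mem_idealMul ((hmem x).1 hy) _

/-- `B / I ⊗_B ₁B_φ ≅ (B / I)_φ`. -/
noncomputable def twistedBimodule.quotTensorEquiv (I : Submodule Bᵐᵒᵖ B) (φ : B ≃ₐ[k] B) :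
    QuotTensor k I (twistedBimodule k B φ) ≃ₗ[Bᵐᵒᵖ]
      twist (AlgEquiv.op φ).toRingEquiv (.of Bᵐᵒᵖ (B ⧸ I)) :=
  (Submodule.quotEquivOfEq _ _ (idealMul_eq I φ)).trans
    (LinearMap.quotKerEquivOfSurjective _
      ((I.mkQ_surjective.comp (rightPartEquiv φ).symm.surjective :)))

/-- `B / I ⊗_B B ≅ B / I`. -/
noncomputable def regularBimodule.quotTensorEquiv (k : Type) [Field k] [Algebra k B]
    (I : Submodule Bᵐᵒᵖ B) :
    QuotTensor k I (regularBimodule k B) ≃ₗ[Bᵐᵒᵖ] B ⧸ I :=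
  (QuotTensor.congr I (twistedBimodule.reflEquiv (k := k)).symm).trans
    ((twistedBimodule.quotTensorEquiv I .refl).trans
      { (RestrictAlong.of _).symm with map_smul' := fun _ _ ↦ rfl })

instance regularBimodule.projective_leftPart :
    Module.Projective B (LeftPart k B (regularBimodule k B)) :=
  .of_equiv' ((twistedBimodule.leftPartEquiv (k := k) .refl).trans
    (RestrictAlong.congr _ twistedBimodule.reflEquiv))

instance regularBimodule.projective_rightPart :
    Module.Projective Bᵐᵒᵖ (RightPart k B (regularBimodule k B)) :=
  have := RestrictAlong.projective
    ((AlgEquiv.op (.refl : B ≃ₐ[k] B)).toRingEquiv : Bᵐᵒᵖ →+* Bᵐᵒᵖ) (M := B)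
  .of_equiv' ((twistedBimodule.rightPartEquiv (k := k) .refl).trans
    (RestrictAlong.congr _ twistedBimodule.reflEquiv))

theorem exists_period_of_isTwistedPeriodicAlgebra [FiniteDimensional k B]
    (h : IsTwistedPeriodicAlgebra k B) (M : Type) [AddCommGroup M] [Module Bᵐᵒᵖ M]
    (hM : IsSimpleModule Bᵐᵒᵖ M) :
    ∃ m, 1 ≤ m ∧ IsSyzygy (ModuleCat.of Bᵐᵒᵖ M) m (ModuleCat.of Bᵐᵒᵖ M) := by
  obtain ⟨n, φ, hn, hφ⟩ := h
  rw [hasProjExactSeq_iff_isSyzygy] at hφ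
  have : IsArtinianRing Bᵐᵒᵖ := .of_finite k _
  let σ : Bᵐᵒᵖ ≃+* Bᵐᵒᵖ := (AlgEquiv.op φ).toRingEquiv
  refine exists_period_of_twist σ hn (fun N _ ↦ ?_) hM
  obtain ⟨I, ⟨e⟩⟩ := exists_quotient_equiv_of_isSimpleModule (B := B) N
  have hI := (hφ.quotTensor inferInstance I).congr_left (twistedBimodule.quotTensorEquiv I φ)
  exact (hI.congr_left (N := twist σ N) (RestrictAlong.congr (σ : Bᵐᵒᵖ →+* Bᵐᵒᵖ) e :)).congr_right
    ((regularBimodule.quotTensorEquiv k I).trans e :)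

end TwistedBimodule

section SimpleProjective

variable {R : Type u} [Ring R] {M N : Type*} [AddCommGroup M] [Module R M] [AddCommGroup N]
  [Module R N]

theorem isSemisimpleModule_prod [IsSemisimpleModule R M] [IsSemisimpleModule R N] :
    IsSemisimpleModule R (M × N) := by
  have hsup := IsSemisimpleModule.sup (IsSemisimpleModule.range (LinearMap.inl R M N))
    (IsSemisimpleModule.range (LinearMap.inr R M N))
  rw [LinearMap.sup_range_inl_inr] at hsup
  exact .congr Submodule.topEquiv.symm

theorem projective_of_injective_of_isSemisimpleModule [IsSemisimpleModule R N]
    [Module.Projective R N] (f : M →ₗ[R] N) (hf : Function.Injective f) :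
    Module.Projective R M :=
  have ⟨r, hr⟩ := IsSemisimpleModule.extension_property f hf .id
  .of_split f r hr

theorem projective_of_surjective_of_isSemisimpleModule [IsSemisimpleModule R N]
    [Module.Projective R N] (f : N →ₗ[R] M) (hf : Function.Surjective f) :
    Module.Projective R M :=
  have ⟨s, hs⟩ := IsSemisimpleModule.lifting_property f hf .id
  .of_split s f hs

theorem exists_isSemisimpleModule_projective_quotient [IsArtinian R N] :
    ∃ K : Submodule R N, (IsSemisimpleModule R (N ⧸ K) ∧ Module.Projective R (N ⧸ K)) ∧
      ∀ (S : Type v) [AddCommGroup S] [Module R S] [IsSimpleModule R S] [Module.Projective R S]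
        (f : N →ₗ[R] S), K ≤ LinearMap.ker f := by
  obtain ⟨K, ⟨hss, hproj⟩, hmin⟩ := IsArtinian.set_has_minimal
    {K : Submodule R N | IsSemisimpleModule R (N ⧸ K) ∧ Module.Projective R (N ⧸ K)}
    ⟨⊤, (isSemisimpleModule_iff R _).2 Subsingleton.instComplementedLattice, inferInstance⟩
  refine ⟨K, ⟨hss, hproj⟩, fun S _ _ _ _ f ↦ ?_⟩
  have := isSemisimpleModule_prod (R := R) (M := N ⧸ K) (N := S)
  let g : N →ₗ[R] (N ⧸ K) × S := K.mkQ.prod f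
  have hg : Function.Injective ((LinearMap.ker g).liftQ g le_rfl) :=
    LinearMap.ker_eq_bot.1 (Submodule.ker_liftQ_eq_bot _ _ _ le_rfl)
  have hker : LinearMap.ker g = K ⊓ LinearMap.ker f := by
    rw [LinearMap.ker_prod, Submodule.ker_mkQ]
  have hnlt := hmin (LinearMap.ker g) ⟨IsSemisimpleModule.of_injective _ hg,
    projective_of_injective_of_isSemisimpleModule _ hg⟩
  exact inf_eq_left.1 (eq_of_le_of_not_lt inf_le_left (hker ▸ hnlt))

variable (R) in
/-- The common annihilator of the simple projective modules. -/
def simpleProjectiveAnnihilator : Ideal R :=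
  ⨅ (S : ModuleCat.{u} R) (_ : IsSimpleModule R S ∧ Module.Projective R S), Module.annihilator R S

instance : (simpleProjectiveAnnihilator R).IsTwoSided :=
  inferInstanceAs (Ideal.IsTwoSided (⨅ _, _))

theorem simpleProjectiveAnnihilator_le_annihilator_iff [IsArtinianRing R] {M : Type u}
    [AddCommGroup M] [Module R M] [IsSimpleModule R M] :
    simpleProjectiveAnnihilator R ≤ Module.annihilator R M ↔ Module.Projective R M := by
  refine ⟨fun hle ↦ ?_, fun hM ↦ iInf₂_le_of_le (.of R M) ⟨‹_›, hM⟩ le_rfl⟩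
  obtain ⟨K, ⟨_, _⟩, hK⟩ := exists_isSemisimpleModule_projective_quotient (R := R) (N := R)
  have hKle : K ≤ simpleProjectiveAnnihilator R := by
    refine le_iInf₂ fun S ⟨_, _⟩ a ha ↦ Module.mem_annihilator.2 fun x ↦ ?_
    exact hK S (LinearMap.toSpanSingleton R S x) ha
  have := IsSimpleModule.nontrivial R M
  obtain ⟨x, hx⟩ := exists_ne (0 : M)
  have hKx : K ≤ LinearMap.ker (LinearMap.toSpanSingleton R M x) := fun a ha ↦
    Module.mem_annihilator.1 (hle (hKle ha)) x
  refine projective_of_surjective_of_isSemisimpleModule (K.liftQ _ hKx) ?_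
  exact .of_comp (g := K.mkQ) (IsSimpleModule.toSpanSingleton_surjective R hx)

end SimpleProjective

section IdealSubbimodule

variable {B : Type} [Ring B] {k : Type} [Field k] [Algebra k B]

variable (k) in
/-- The identity map from `B` to the regular bimodule on `B`. -/
noncomputable def regularBimodule.of : B ≃+ regularBimodule k B :=
  (twistedBimodule.of .refl).trans twistedBimodule.reflEquiv.toAddEquiv

theorem regularBimodule.smul_of (b : B) (c : Bᵐᵒᵖ) (x : B) :
    (b ⊗ₜ c : Env k B) • of k x = of k (b * x * c.unop) :=
  (twistedBimodule.reflEquiv.map_smul _ _).symm.trans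
    (congrArg twistedBimodule.reflEquiv (twistedBimodule.smul_of .refl b c x))

theorem regularBimodule.quotTensorEquiv_mkQ_of (I : Submodule Bᵐᵒᵖ B) (x : B) :
    quotTensorEquiv k I ((idealMul k I _).mkQ (RestrictAlong.of _ (of k x))) = I.mkQ x := rfl

instance regularBimodule.finite : Module.Finite (Env k B) (regularBimodule k B) :=
  .of_surjective (LinearMap.toSpanSingleton (Env k B) _ (of k (1 : B))) fun y ↦ by
    obtain ⟨x, rfl⟩ := (of k).surjective y
    refine ⟨x ⊗ₜ 1, ?_⟩
    rw [LinearMap.toSpanSingleton_apply, smul_of, MulOpposite.unop_one, mul_one, mul_one]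

variable (k) in
/-- A two-sided ideal of `Bᵐᵒᵖ`, as a sub-bimodule of `B`. -/
noncomputable def idealSubbimodule (J : Ideal Bᵐᵒᵖ) [J.IsTwoSided] :
    Submodule (Env k B) (regularBimodule k B) where
  carrier := {x | MulOpposite.op ((regularBimodule.of k).symm x) ∈ J}
  zero_mem' := J.zero_mem
  add_mem' := J.add_mem
  smul_mem' a x hx := by
    obtain ⟨x, rfl⟩ := (regularBimodule.of k).surjective x
    induction a using TensorProduct.induction_on with
    | zero => exact (zero_smul (Env k B) (regularBimodule.of k x)).symm ▸ J.zero_mem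
    | add a b ha hb => exact (add_smul a b (regularBimodule.of k x)).symm ▸ J.add_mem ha hb
    | tmul b c =>
      rw [regularBimodule.smul_of]
      exact J.mul_mem_left c (J.mul_mem_right (MulOpposite.op b) hx)

variable {J : Ideal Bᵐᵒᵖ} [J.IsTwoSided] {I : Submodule Bᵐᵒᵖ B}

theorem of_mem_idealSubbimodule {x : B} :
    regularBimodule.of k x ∈ idealSubbimodule k J ↔ MulOpposite.op x ∈ J := Iff.rfl

theorem map_mkQ_idealSubbimodule_bijective (h : J ≤ Module.annihilator Bᵐᵒᵖ (B ⧸ I)) :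
    Function.Bijective (QuotTensor.map I (idealSubbimodule k J).mkQ) := by
  refine ⟨(injective_iff_map_eq_zero _).2 fun z hz ↦ ?_,
    QuotTensor.map_surjective (Submodule.mkQ_surjective _)⟩
  obtain ⟨x, hx, rfl⟩ := QuotTensor.exists_eq_mkQ_of_map_eq_zero (Submodule.mkQ_surjective _) hz
  obtain ⟨x, rfl⟩ := (regularBimodule.of k).surjective x
  have hxJ : MulOpposite.op x ∈ J :=
    of_mem_idealSubbimodule.1 ((Submodule.Quotient.mk_eq_zero _).1 hx)
  refine (regularBimodule.quotTensorEquiv k I).injective ?_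
  rw [regularBimodule.quotTensorEquiv_mkQ_of, map_zero, ← one_mul x]
  exact Module.mem_annihilator.1 (h hxJ) (I.mkQ 1)

theorem subsingleton_quotTensor_idealSubbimodule [IsSimpleModule Bᵐᵒᵖ (B ⧸ I)]
    (h : ¬ J ≤ Module.annihilator Bᵐᵒᵖ (B ⧸ I)) :
    Subsingleton (QuotTensor k I (regularBimodule k B ⧸ idealSubbimodule k J)) := by
  have := IsSimpleModule.congr (regularBimodule.quotTensorEquiv k I)
  have hsurj := QuotTensor.map_surjective (I := I) (idealSubbimodule k J).mkQ_surjective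
  rcases LinearMap.injective_or_eq_zero (QuotTensor.map I (idealSubbimodule k J).mkQ)
    with hinj | hzero
  · refine (h fun c hc ↦ Module.mem_annihilator.2 fun y ↦ ?_).elim
    obtain ⟨y, rfl⟩ := I.mkQ_surjective y
    have hmem : regularBimodule.of k (y * c.unop) ∈ idealSubbimodule k J :=
      of_mem_idealSubbimodule.2 (J.mul_mem_right (MulOpposite.op y) hc)
    have hzero_mkQ := (injective_iff_map_eq_zero _).1 hinj
      ((idealMul k I _).mkQ (RestrictAlong.of _ (regularBimodule.of k (y * c.unop))))
      (congrArg (idealMul k I _).mkQ ((Submodule.Quotient.mk_eq_zero _).2 hmem))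
    have hI := congrArg (regularBimodule.quotTensorEquiv k I) hzero_mkQ
    rwa [regularBimodule.quotTensorEquiv_mkQ_of, map_zero] at hI
  · refine subsingleton_of_forall_eq 0 fun z ↦ ?_
    obtain ⟨y, rfl⟩ := hsurj z
    rw [hzero, LinearMap.zero_apply]

end IdealSubbimodule

section FixesSimples

/-- `B / I ⊗_B X ≅ B / I` for all maximal right ideals `I`, that is, `- ⊗_B X` preserves the
isomorphism class of every simple right module. -/
def FixesSimples (k B : Type*) [CommRing k] [Ring B] [Algebra k B] (X : Type*) [AddCommGroup X]
    [Module (Env k B) X] : Prop :=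
  ∀ (I : Submodule Bᵐᵒᵖ B) [IsSimpleModule Bᵐᵒᵖ (B ⧸ I)],
    Nonempty (QuotTensor k I X ≃ₗ[Bᵐᵒᵖ] B ⧸ I)

/-- `B / I ⊗_B (X ⊕ Z) ≅ (B / I ⊗_B X) ⊕ (B / I ⊗_B Z)`. -/
noncomputable def QuotTensor.prodEquiv {k B : Type*} [CommRing k] [Ring B] [Algebra k B]
    (I : Submodule Bᵐᵒᵖ B) (X Z : Type*) [AddCommGroup X] [Module (Env k B) X] [AddCommGroup Z]
    [Module (Env k B) Z] :
    QuotTensor k I (X × Z) ≃ₗ[Bᵐᵒᵖ] QuotTensor k I X × QuotTensor k I Z :=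
  LinearEquiv.ofLinearMap
    ((map I (LinearMap.fst (Env k B) X Z)).prod (map I (LinearMap.snd (Env k B) X Z)))
    ((map I (LinearMap.inl (Env k B) X Z)).coprod (map I (LinearMap.inr (Env k B) X Z)))
    (by
      refine LinearMap.ext fun ⟨x, z⟩ ↦ ?_
      obtain ⟨x, rfl⟩ := (idealMul k I X).mkQ_surjective x
      obtain ⟨z, rfl⟩ := (idealMul k I Z).mkQ_surjective z
      simp only [LinearMap.comp_apply, LinearMap.prod_apply, LinearMap.coprod_apply,
        map_add, map_mkQ]
      refine Prod.ext ?_ ?_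
      · exact (map_add _ _ _).symm.trans (congrArg _ (add_zero x))
      · exact (map_add _ _ _).symm.trans (congrArg _ (zero_add z)))
    (by
      ext x : 2
      exact (map_add (idealMul k I (X × Z)).mkQ _ _).symm.trans
        (congrArg _ (Prod.fst_add_snd (show X × Z from x))))

variable {k B : Type} [Field k] [Ring B] [Algebra k B] [FiniteDimensional k B]

/-- The minimal bimodule syzygies of `B` lose the simple projective modules, which this bimodule
supplies. -/
theorem exists_projective_fixing_projective_simples (hrad : EnvRadicalLe k B) :
    ∃ Z : ModuleCat.{0} (Env k B), Module.Projective (Env k B) Z ∧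
      ∀ (I : Submodule Bᵐᵒᵖ B) [IsSimpleModule Bᵐᵒᵖ (B ⧸ I)],
        (Module.Projective Bᵐᵒᵖ (B ⧸ I) → Nonempty (QuotTensor k I Z ≃ₗ[Bᵐᵒᵖ] B ⧸ I)) ∧
        (¬ Module.Projective Bᵐᵒᵖ (B ⧸ I) → Subsingleton (QuotTensor k I Z)) := by
  have : IsArtinianRing Bᵐᵒᵖ := .of_finite k _
  have : IsArtinianRing (Env k B) := .of_finite k _
  let J := simpleProjectiveAnnihilator Bᵐᵒᵖ
  obtain ⟨Z, p, -, hproj, hsurj, hp⟩ :=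
    exists_projective_cover (R := Env k B) (regularBimodule k B ⧸ idealSubbimodule k J)
  refine ⟨Z, hproj, fun I _ ↦ ?_⟩
  have hbij [Module.Projective Bᵐᵒᵖ (QuotTensor k I (_ ⧸ idealSubbimodule k J))] :
      Function.Bijective (QuotTensor.map I p) :=
    (hp.quotTensor hrad (jacobson_le_of_isSimpleModule_quotient I) hsurj).bijective_of_projective
      (QuotTensor.map_surjective hsurj)
  rw [← simpleProjectiveAnnihilator_le_annihilator_iff]
  refine ⟨fun hle ↦ ?_, fun hnle ↦ ?_⟩
  · let e := (LinearEquiv.ofBijective _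
      (map_mkQ_idealSubbimodule_bijective (k := k) hle)).symm.trans
        (regularBimodule.quotTensorEquiv k I)
    have := simpleProjectiveAnnihilator_le_annihilator_iff.1 hle
    have := Module.Projective.of_equiv' e.symm
    exact ⟨(LinearEquiv.ofBijective _ hbij).trans e⟩
  · have := subsingleton_quotTensor_idealSubbimodule (k := k) hnle
    exact hbij.injective.subsingleton

theorem exists_isSyzygy_fixesSimples (hrad : EnvRadicalLe k B) {n : ℕ}
    (hn : ∀ (M : Type) [AddCommGroup M] [Module Bᵐᵒᵖ M],
      IsSimpleModule Bᵐᵒᵖ M → IsSyzygy (.of Bᵐᵒᵖ M) (n + 1) (.of Bᵐᵒᵖ M)) :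
    ∃ X : ModuleCat.{0} (Env k B), IsSyzygy X (n + 1) (regularBimodule k B) ∧
      FixesSimples k B X := by
  have : IsArtinianRing Bᵐᵒᵖ := .of_finite k _
  have : IsArtinianRing (Env k B) := .of_finite k _
  obtain ⟨K, hK⟩ := exists_isMinimalSyzygy (n + 1) (regularBimodule k B)
  obtain ⟨Z, hZproj, hZ⟩ := exists_projective_fixing_projective_simples hrad
  refine ⟨.of _ (K × Z), hK.isSyzygy.prod_projective Z, fun I hI ↦ ?_⟩
  let e := regularBimodule.quotTensorEquiv k I
  have hKI := hK.quotTensor hrad (jacobson_le_of_isSimpleModule_quotient I) inferInstance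
  by_cases hproj : Module.Projective Bᵐᵒᵖ (B ⧸ I)
  · have := Module.Projective.of_equiv' e.symm
    have : Subsingleton (QuotTensor k I K) := hKI.subsingleton_of_projective
    have : Unique (QuotTensor k I K) := uniqueOfSubsingleton 0
    obtain ⟨f⟩ := (hZ I).1 hproj
    exact ⟨(QuotTensor.prodEquiv I K Z).trans (LinearEquiv.uniqueProd.trans f)⟩
  · have := (hZ I).2 hproj
    have : Unique (QuotTensor k I Z) := uniqueOfSubsingleton 0
    have hsum := ((hn (B ⧸ I) hI).congr_right (N := .of _ (QuotTensor k I (regularBimodule k B)))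
      e.symm).isSumWithProjective_of_isMinimalSyzygy hKI (.refl _)
    obtain ⟨f⟩ := hsum.nonempty_equiv_of_isSimpleModule hproj
    exact ⟨(QuotTensor.prodEquiv I K Z).trans (LinearEquiv.prodUnique.trans f.symm)⟩

end FixesSimples

section Length

variable {R : Type*} [Ring R] {M N : Type*} [AddCommGroup M] [Module R M] [AddCommGroup N]
  [Module R N]

theorem length_sup_range_le {N₀ : Submodule R N} {f : M →ₗ[R] N} {A : Submodule R M}
    (hA : A ≤ N₀.comap f) :
    Module.length R (N₀ ⊔ LinearMap.range f : Submodule R N) ≤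
      Module.length R N₀ + Module.length R (M ⧸ A) := by
  let N₁ := N₀ ⊔ LinearMap.range f
  let g : M →ₗ[R] N₁ ⧸ N₀.comap N₁.subtype :=
    Submodule.mkQ _ ∘ₗ f.codRestrict N₁ fun x ↦ Submodule.mem_sup_right ⟨x, rfl⟩
  have hg : Function.Surjective g := by
    intro z
    obtain ⟨⟨z, hz⟩, rfl⟩ := Submodule.mkQ_surjective _ z
    obtain ⟨a, ha, _, ⟨x, rfl⟩, rfl⟩ := Submodule.mem_sup.1 hz
    refine ⟨x, (Submodule.Quotient.eq _).2 (?_ : f x - (a + f x) ∈ N₀)⟩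
    rwa [sub_add_cancel_right, neg_mem_iff]
  have hker : A ≤ LinearMap.ker g := fun x hx ↦ (Submodule.Quotient.mk_eq_zero _).2 (hA hx)
  rw [Module.length_eq_add_of_exact (Submodule.inclusion (le_sup_left : N₀ ≤ N₁))
    (Submodule.mkQ _) (Submodule.inclusion_injective _) (Submodule.mkQ_surjective _)
    (LinearMap.exact_iff.2 (by rw [Submodule.ker_mkQ, Submodule.range_inclusion]))]
  exact add_le_add_right (Module.length_le_of_surjective (A.liftQ g hker)
    (.of_comp (g := A.mkQ) hg)) _

theorem length_eq_length_add_one_of_covBy {N₀ N₁ : Submodule R M} (h : N₀ ⋖ N₁) :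
    Module.length R N₁ = Module.length R N₀ + 1 := by
  have := (covBy_iff_quot_is_simple h.le).1 h
  rw [Module.length_eq_add_of_exact (Submodule.inclusion h.le)
    (Submodule.mkQ _) (Submodule.inclusion_injective h.le) (Submodule.mkQ_surjective _)
    (LinearMap.exact_iff.2 (by rw [Submodule.ker_mkQ, Submodule.range_inclusion])),
    Module.length_eq_one R (N₁ ⧸ Submodule.comap N₁.subtype N₀)]

theorem isSimpleModule_quotient_comap_of_covBy {N₀ N₁ : Submodule R N} (h : N₀ ⋖ N₁)
    {f : M →ₗ[R] N} (hf : LinearMap.range f ≤ N₁) (hne : ¬ LinearMap.range f ≤ N₀) :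
    IsSimpleModule R (M ⧸ N₀.comap f) := by
  have := (covBy_iff_quot_is_simple h.le).1 h
  let g : M →ₗ[R] N₁ ⧸ N₀.comap N₁.subtype :=
    Submodule.mkQ _ ∘ₗ f.codRestrict N₁ fun x ↦ hf ⟨x, rfl⟩
  have hker : LinearMap.ker g = N₀.comap f := Submodule.ext fun x ↦ Submodule.Quotient.mk_eq_zero _
  have hsurj : Function.Surjective g := by
    refine (LinearMap.surjective_or_eq_zero g).resolve_right fun hg ↦ hne ?_
    rwa [LinearMap.range_le_iff_comap, ← hker, LinearMap.ker_eq_top]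
  exact hker ▸ IsSimpleModule.congr (g.quotKerEquivOfSurjective hsurj)

theorem injective_of_surjective_of_length_le [IsArtinian R N] [IsNoetherian R N] {f : M →ₗ[R] N}
    (hf : Function.Surjective f) (h : Module.length R M ≤ Module.length R N) :
    Function.Injective f := by
  rw [Module.length_eq_add_of_exact (LinearMap.ker f).subtype f (Submodule.subtype_injective _) hf
    (LinearMap.exact_subtype_ker_map f)] at h
  have hker : Module.length R (LinearMap.ker f) ≤ 0 :=
    (ENat.add_le_add_iff_right Module.length_ne_top).1 (h.trans_eq (zero_add _).symm)
  rw [nonpos_iff_eq_zero, Module.length_eq_zero_iff] at hker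
  exact LinearMap.ker_eq_bot.1 (Submodule.subsingleton_iff_eq_bot.1 hker)

end Length

section IdealMulLattice

variable {k B : Type*} [CommRing k] [Ring B] [Algebra k B] {X : Type*} [AddCommGroup X]
  [Module (Env k B) X] {I J : Submodule Bᵐᵒᵖ B}

theorem idealMul_mono (h : I ≤ J) : idealMul k I X ≤ idealMul k J X :=
  idealMul_le_iff.2 fun _ hb x ↦ leftMul_mem_idealMul (h hb) x

theorem idealMul_bot : idealMul k (⊥ : Submodule Bᵐᵒᵖ B) X = ⊥ :=
  le_bot_iff.1 (idealMul_le_iff.2 fun b hb x ↦ by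
    rw [(Submodule.mem_bot _).1 hb, map_zero, LinearMap.zero_apply]
    exact Submodule.zero_mem _)

theorem idealMul_top : idealMul k (⊤ : Submodule Bᵐᵒᵖ B) X = ⊤ :=
  eq_top_iff.2 fun x _ ↦ by
    simpa only [map_one, Module.End.one_apply] using
      leftMul_mem_idealMul (k := k) (Submodule.mem_top : (1 : B) ∈ (⊤ : Submodule Bᵐᵒᵖ B)) x

theorem idealMul_sup_le : idealMul k (I ⊔ J) X ≤ idealMul k I X ⊔ idealMul k J X :=
  idealMul_le_iff.2 fun b hb x ↦ by
    obtain ⟨a, ha, c, hc, rfl⟩ := Submodule.mem_sup.1 hb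
    rw [map_add, LinearMap.add_apply]
    exact Submodule.add_mem_sup (leftMul_mem_idealMul ha x) (leftMul_mem_idealMul hc x)

theorem idealMul_range_mulLeft_le (b : B) :
    idealMul k (LinearMap.range (LinearMap.mulLeft Bᵐᵒᵖ b)) X ≤ LinearMap.range (leftMul k X b) :=
  idealMul_le_iff.2 fun _ ⟨c, hc⟩ x ↦ ⟨leftMul k X c x, by
    rw [← hc, LinearMap.mulLeft_apply, map_mul, Module.End.mul_apply]⟩

theorem idealMul_comap_mulLeft_le (b : B) :
    idealMul k (I.comap (LinearMap.mulLeft Bᵐᵒᵖ b)) X ≤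
      (idealMul k I X).comap (leftMul k X b) :=
  idealMul_le_iff.2 fun c hc x ↦ by
    have hbc : b * c ∈ I := hc
    rw [Submodule.mem_comap, ← Module.End.mul_apply, ← map_mul]
    exact leftMul_mem_idealMul hbc x

theorem mem_idealMul_ker_of_leftMul_eq_zero [Module.Projective B (LeftPart k B X)] {b : B}
    {x : RightPart k B X} (hx : leftMul k X b x = 0) :
    x ∈ idealMul k (LinearMap.ker (LinearMap.mulLeft Bᵐᵒᵖ b)) X := by
  obtain ⟨s, hs⟩ := Module.projective_def'.1 ‹Module.Projective B (LeftPart k B X)›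
  have hcoord (y : LeftPart k B X) : b * s x y = 0 := by
    have hbx : s (b • (show LeftPart k B X from x)) = s 0 := congrArg s hx
    rw [map_smul, map_zero] at hbx
    exact DFunLike.congr_fun hbx y
  have hsum : ∑ y ∈ (s x).support, leftMul k X (s x y) y = x := LinearMap.congr_fun hs x
  rw [← hsum]
  exact Submodule.sum_mem _ fun y _ ↦ leftMul_mem_idealMul (hcoord y) y

end IdealMulLattice

section RightStructure

/-- `B / I` is a quotient of `B / I ⊗_B X`. -/
def QuotTensorSurjects {B : Type*} [Ring B] (k X : Type*) [CommRing k] [Algebra k B]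
    [AddCommGroup X] [Module (Env k B) X] (I : Submodule Bᵐᵒᵖ B) : Prop :=
  ∃ f : RightPart k B X →ₗ[Bᵐᵒᵖ] B ⧸ I, Function.Surjective f ∧ idealMul k I X ≤ LinearMap.ker f

theorem QuotTensorSurjects.inf {k B : Type*} [CommRing k] [Ring B] [Algebra k B] {X : Type*}
    [AddCommGroup X] [Module (Env k B) X] {I J : Submodule Bᵐᵒᵖ B}
    (hI : QuotTensorSurjects k X I) (hJ : QuotTensorSurjects k X J) (hIJ : Codisjoint I J) :
    QuotTensorSurjects k X (I ⊓ J) := by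
  obtain ⟨f, hf, hIf⟩ := hI
  obtain ⟨g, hg, hJg⟩ := hJ
  have hkersup : LinearMap.ker f ⊔ LinearMap.ker g = ⊤ := by
    rw [eq_top_iff, ← idealMul_top (k := k), ← hIJ.eq_top]
    exact idealMul_sup_le.trans (sup_le_sup hIf hJg)
  have hfg : Function.Surjective (f.prod g) := by
    rw [← LinearMap.range_eq_top, LinearMap.range_prod_eq hkersup, LinearMap.range_eq_top.2 hf,
      LinearMap.range_eq_top.2 hg, Submodule.prod_top]
  have hker : LinearMap.ker (I.mkQ.prod J.mkQ) = I ⊓ J := by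
    rw [LinearMap.ker_prod, Submodule.ker_mkQ, Submodule.ker_mkQ]
  have hmkQ : Function.Surjective (I.mkQ.prod J.mkQ) := by
    rw [← LinearMap.range_eq_top, LinearMap.range_prod_eq, I.range_mkQ, J.range_mkQ,
      Submodule.prod_top]
    rw [I.ker_mkQ, J.ker_mkQ, hIJ.eq_top]
  let e : (B ⧸ I ⊓ J) ≃ₗ[Bᵐᵒᵖ] (B ⧸ I) × (B ⧸ J) := (Submodule.quotEquivOfEq _ _ hker.symm).trans
    (LinearMap.quotKerEquivOfSurjective _ hmkQ)
  refine ⟨e.symm ∘ₗ f.prod g, e.symm.surjective.comp hfg, ?_⟩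
  rw [LinearEquiv.ker_comp, LinearMap.ker_prod]
  exact le_inf ((idealMul_mono inf_le_left).trans hIf) ((idealMul_mono inf_le_right).trans hJg)

instance (B : Type*) [Ring B] : Module.Finite Bᵐᵒᵖ B := .equiv (opSelfEquiv B)

namespace FixesSimples

variable {k B : Type*} [CommRing k] [Ring B] [Algebra k B] {X : Type*} [AddCommGroup X]
  [Module (Env k B) X]

theorem leftMul_injective [Module.Projective B (LeftPart k B X)] (hX : FixesSimples k B X) :
    Function.Injective (leftMul k X : B → Module.End Bᵐᵒᵖ (RightPart k B X)) := by
  refine (injective_iff_map_eq_zero _).2 fun b hb ↦ ?_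
  have htop : LinearMap.ker (LinearMap.mulLeft Bᵐᵒᵖ b) = ⊤ := by
    refine (eq_top_or_exists_le_coatom _).resolve_right fun ⟨I, hI, hle⟩ ↦ ?_
    have : IsSimpleModule Bᵐᵒᵖ (B ⧸ I) := isSimpleModule_iff_isCoatom.2 hI
    obtain ⟨e⟩ := hX I
    have hIX : idealMul k I X = ⊤ := eq_top_iff.2 fun x _ ↦
      idealMul_mono hle (mem_idealMul_ker_of_leftMul_eq_zero (LinearMap.congr_fun hb x))
    have := IsSimpleModule.nontrivial Bᵐᵒᵖ (B ⧸ I)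
    have := e.toEquiv.nontrivial
    exact Submodule.Quotient.nontrivial_iff.1 this hIX
  simpa only [LinearMap.mem_ker, LinearMap.mulLeft_apply, mul_one] using
    htop.ge (Submodule.mem_top (x := (1 : B)))

variable [IsArtinianRing Bᵐᵒᵖ]

theorem exists_quotTensorSurjects (hX : FixesSimples k B X) :
    ∃ I ≤ Module.jacobson Bᵐᵒᵖ B, QuotTensorSurjects k X I := by
  have htop : QuotTensorSurjects k X (⊤ : Submodule Bᵐᵒᵖ B) :=
    ⟨0, fun y ↦ ⟨0, Subsingleton.elim _ _⟩, fun _ _ ↦ Subsingleton.elim _ _⟩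
  obtain ⟨I, hI, hmin⟩ := IsArtinian.set_has_minimal {I | QuotTensorSurjects k X I} ⟨⊤, htop⟩
  refine ⟨I, le_sInf fun J hJ ↦ ?_, hI⟩
  by_contra hIJ
  have : IsSimpleModule Bᵐᵒᵖ (B ⧸ J) := isSimpleModule_iff_isCoatom.2 hJ
  obtain ⟨e⟩ := hX J
  have hJ' : QuotTensorSurjects k X J := ⟨e ∘ₗ (idealMul k J X).mkQ,
    e.surjective.comp (Submodule.mkQ_surjective _), by rw [LinearEquiv.ker_comp, Submodule.ker_mkQ]⟩
  exact hmin (I ⊓ J) (hI.inf hJ' (hJ.not_le_iff_codisjoint.1 hIJ).symm) (inf_lt_left.2 hIJ)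

theorem exists_surjective [Module.Projective Bᵐᵒᵖ (RightPart k B X)] (hX : FixesSimples k B X) :
    ∃ f : RightPart k B X →ₗ[Bᵐᵒᵖ] B, Function.Surjective f := by
  obtain ⟨I, hle, f, hf, -⟩ := hX.exists_quotTensorSurjects
  obtain ⟨g, hg⟩ := Module.projective_lifting_property I.mkQ f I.mkQ_surjective
  refine ⟨g, LinearMap.range_eq_top.1 (eq_top_of_sup_jacobson_smul_top _ ?_)⟩
  have hsup : LinearMap.range g ⊔ I = ⊤ := by
    rw [← I.ker_mkQ, ← Submodule.comap_map_eq, ← LinearMap.range_comp, hg,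
      LinearMap.range_eq_top.2 hf, Submodule.comap_top]
  refine eq_top_iff.2 (hsup.ge.trans ?_)
  exact sup_le_sup_left (hle.trans (jacobson_le_ringJacobson_smul_top B)) _

theorem length_idealMul_le (hX : FixesSimples k B X) (I : Submodule Bᵐᵒᵖ B) :
    Module.length Bᵐᵒᵖ (idealMul k I X) ≤ Module.length Bᵐᵒᵖ I := by
  induction I using WellFoundedLT.induction with | _ I ih
  rcases eq_bot_or_bot_lt I with rfl | hpos
  · rw [idealMul_bot, Module.length_bot]
    exact zero_le
  obtain ⟨I₀, -, hcov⟩ := exists_le_covBy_of_lt hpos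
  obtain ⟨b, hb, hb₀⟩ := SetLike.exists_of_lt hcov.lt
  let μ := LinearMap.mulLeft Bᵐᵒᵖ b
  have hrange : LinearMap.range μ ≤ I := by
    rintro _ ⟨c, rfl⟩
    exact I.smul_mem (MulOpposite.op c) hb
  have hrange₀ : ¬ LinearMap.range μ ≤ I₀ := fun h ↦ hb₀ (h ⟨1, mul_one b⟩)
  have hsimple := isSimpleModule_quotient_comap_of_covBy hcov hrange hrange₀
  obtain ⟨e⟩ := hX (I₀.comap μ)
  have hsup : I = I₀ ⊔ LinearMap.range μ :=
    (hcov.eq_or_eq le_sup_left (sup_le hcov.le hrange)).resolve_left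
      (fun h ↦ hrange₀ (sup_eq_left.1 h)) |>.symm
  have hle : idealMul k I X ≤ idealMul k I₀ X ⊔ LinearMap.range (leftMul k X b) := by
    rw [hsup]
    exact idealMul_sup_le.trans (sup_le_sup_left (idealMul_range_mulLeft_le b) _)
  calc Module.length Bᵐᵒᵖ (idealMul k I X)
      ≤ Module.length Bᵐᵒᵖ (idealMul k I₀ X ⊔ LinearMap.range (leftMul k X b) : Submodule _ _) :=
        Module.length_le_of_injective (Submodule.inclusion hle) (Submodule.inclusion_injective _)
    _ ≤ Module.length Bᵐᵒᵖ (idealMul k I₀ X) +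
          Module.length Bᵐᵒᵖ (QuotTensor k (I₀.comap μ) X) :=
        length_sup_range_le (idealMul_comap_mulLeft_le b)
    _ = Module.length Bᵐᵒᵖ (idealMul k I₀ X) + 1 := by
        rw [e.length_eq, Module.length_eq_one Bᵐᵒᵖ (B ⧸ I₀.comap μ)]
    _ ≤ Module.length Bᵐᵒᵖ I₀ + 1 := add_le_add_left (ih I₀ hcov.lt) 1
    _ = Module.length Bᵐᵒᵖ I := (length_eq_length_add_one_of_covBy hcov).symm

theorem nonempty_rightPart_equiv [Module.Projective Bᵐᵒᵖ (RightPart k B X)]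
    (hX : FixesSimples k B X) :
    Nonempty (RightPart k B X ≃ₗ[Bᵐᵒᵖ] B) := by
  obtain ⟨f, hf⟩ := hX.exists_surjective
  have hlength : Module.length Bᵐᵒᵖ (RightPart k B X) ≤ Module.length Bᵐᵒᵖ B := by
    have htop := hX.length_idealMul_le ⊤
    rwa [idealMul_top, Module.length_top, Module.length_top] at htop
  exact ⟨.ofBijective f ⟨injective_of_surjective_of_length_le hf hlength, hf⟩⟩

end FixesSimples

end RightStructure

section RecogniseTwist

section LeftActionHom

variable {k B : Type*} [CommRing k] [Ring B] [Algebra k B] {X : Type*} [AddCommGroup X]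
  [Module (Env k B) X] (f : RightPart k B X ≃ₗ[Bᵐᵒᵖ] B)

/-- The left action on a bimodule `X` with `X_B ≅ B_B`, read as an endomorphism of `B` through
`End(B_B) ≅ B`. -/
noncomputable def leftActionHom : B →ₐ[k] B :=
  { ((RingEquiv.moduleEndSelfOp B).symm : _ →+* B).comp
      ((f.conjRingEquiv : _ →+* Module.End Bᵐᵒᵖ B).comp (leftMul k X)) with
    commutes' := fun r ↦ by
      have hcentral : leftMul k X (algebraMap k B r) (f.symm 1) =
          algebraMap k Bᵐᵒᵖ r • f.symm 1 :=
        congrArg (· • (show X from f.symm 1))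
          (Algebra.TensorProduct.algebraMap_apply' (A := B) (B := Bᵐᵒᵖ) r)
      change f (leftMul k X (algebraMap k B r) (f.symm 1)) = algebraMap k B r
      rw [hcentral, map_smul, f.apply_symm_apply, MulOpposite.smul_eq_mul_unop, one_mul]
      rfl }

theorem apply_leftMul (b : B) (x : RightPart k B X) :
    f (leftMul k X b x) = leftActionHom f b * f x := by
  have hx : x = MulOpposite.op (f x) • f.symm 1 := by
    rw [← map_smul, op_smul_eq_mul, one_mul, f.symm_apply_apply]
  calc f (leftMul k X b x)
      = f (leftMul k X b (MulOpposite.op (f x) • f.symm 1)) := by rw [← hx]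
    _ = leftActionHom f b * f x := by rw [map_smul, map_smul]; rfl

theorem leftActionHom_injective (h : Function.Injective (leftMul k X : B → Module.End Bᵐᵒᵖ _)) :
    Function.Injective (leftActionHom f) :=
  (RingEquiv.moduleEndSelfOp B).symm.injective.comp (f.conjRingEquiv.injective.comp h)

end LeftActionHom

variable {k B : Type} [Field k] [Ring B] [Algebra k B] {X : Type*} [AddCommGroup X]
  [Module (Env k B) X]

/-- A bimodule with `X_B ≅ B_B` on which `B` acts from the left through an automorphism `φ` is
`₁B_{φ⁻¹}`. -/
noncomputable def equivTwistedBimodule (f : RightPart k B X ≃ₗ[Bᵐᵒᵖ] B) (φ : B ≃ₐ[k] B)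
    (hφ : ∀ b x, f (leftMul k X b x) = φ b * f x) :
    X ≃ₗ[Env k B] twistedBimodule k B φ.symm :=
  let e : X ≃+ twistedBimodule k B φ.symm :=
    (RestrictAlong.of _).trans (f.toAddEquiv.trans
      (φ.symm.toAddEquiv.trans (twistedBimodule.of φ.symm)))
  have he (x : X) : e x = twistedBimodule.of φ.symm (φ.symm (f (RestrictAlong.of _ x))) := rfl
  { e with
    map_smul' := fun a x ↦ by
      change e (a • x) = a • e x
      induction a using TensorProduct.induction_on with
      | zero => rw [zero_smul (Env k B) x, zero_smul (Env k B) (e x), map_zero]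
      | add a b ha hb =>
        rw [add_smul (R := Env k B) a b x, add_smul (R := Env k B) a b (e x), map_add, ha, hb]
      | tmul b c =>
        have hsmul : f (RestrictAlong.of _ ((b ⊗ₜ c : Env k B) • x)) =
            φ b * f (RestrictAlong.of _ x) * c.unop := by
          rw [tmul_smul_eq_right_left, ← hφ, leftMul_of]
          exact f.map_smul c _
        rw [he, he, twistedBimodule.smul_of, hsmul, map_mul φ.symm, map_mul φ.symm,
          φ.symm_apply_apply] }

theorem FixesSimples.exists_equiv_twistedBimodule [FiniteDimensional k B]
    [Module.Projective B (LeftPart k B X)] [Module.Projective Bᵐᵒᵖ (RightPart k B X)]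
    (hX : FixesSimples k B X) :
    ∃ φ : B ≃ₐ[k] B, Nonempty (X ≃ₗ[Env k B] twistedBimodule k B φ) := by
  have : IsArtinianRing Bᵐᵒᵖ := .of_finite k _
  obtain ⟨f⟩ := hX.nonempty_rightPart_equiv
  have hinj := leftActionHom_injective f hX.leftMul_injective
  let φ : B ≃ₐ[k] B := .ofBijective (leftActionHom f)
    ⟨hinj, (LinearMap.injective_iff_surjective (f := (leftActionHom f).toLinearMap)).1 hinj⟩
  exact ⟨φ.symm, ⟨equivTwistedBimodule f φ (apply_leftMul f)⟩⟩

end RecogniseTwist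

theorem isTwistedPeriodicAlgebra_of_exists_period {k B : Type} [Field k] [Ring B] [Algebra k B]
    [FiniteDimensional k B] (hrad : EnvRadicalLe k B)
    (h : ∀ (M : Type) [AddCommGroup M] [Module Bᵐᵒᵖ M], IsSimpleModule Bᵐᵒᵖ M →
      ∃ m, 1 ≤ m ∧ IsSyzygy (ModuleCat.of Bᵐᵒᵖ M) m (ModuleCat.of Bᵐᵒᵖ M)) :
    IsTwistedPeriodicAlgebra k B := by
  have : IsArtinianRing Bᵐᵒᵖ := .of_finite k _
  obtain ⟨n, hn⟩ := exists_common_period h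
  obtain ⟨X, hXsyz, hX⟩ := exists_isSyzygy_fixesSimples hrad hn
  have : Module.Projective B (LeftPart k B X) :=
    (RestrictAlong.isSyzygy _ hXsyz).projective regularBimodule.projective_leftPart
  have : Module.Projective Bᵐᵒᵖ (RightPart k B X) :=
    (RestrictAlong.isSyzygy _ hXsyz).projective regularBimodule.projective_rightPart
  obtain ⟨φ, ⟨e⟩⟩ := hX.exists_equiv_twistedBimodule
  exact ⟨n + 1, φ, n.succ_pos, (hasProjExactSeq_iff_isSyzygy ..).2 (hXsyz.congr_left e)⟩

/-- Let `B` be a finite-dimensional `k`-algebra such that `B/rad B` is a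
separable `k`-algebra (i.e. for every field extension `K/k` and every realisation `S` of the
quotient of `B` by its Jacobson radical, `K ⊗[k] S` is semisimple). Then `B` is twisted
periodic if and only if every simple right `B`-module (= simple left `Bᵐᵒᵖ`-module) is
`Ω`-periodic, i.e. admits an exact sequence `0 → M → Q_{m-1} → ⋯ → Q_0 → M → 0` with all
`Q_i` projective. -/
theorem isTwistedPeriodicAlgebra_iff_simples_omega_periodic
    (k B : Type) [Field k] [Ring B] [Algebra k B] [FiniteDimensional k B]
    (hsep : ∀ (S : Type) [Ring S] [Algebra k S] (π : B →ₐ[k] S),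
      Function.Surjective π → RingHom.ker π = Ideal.jacobson (⊥ : Ideal B) →
      ∀ (K : Type) [Field K] [Algebra k K], IsSemisimpleRing (K ⊗[k] S)) :
    IsTwistedPeriodicAlgebra k B ↔
      ∀ (M : Type) [AddCommGroup M] [Module Bᵐᵒᵖ M], IsSimpleModule Bᵐᵒᵖ M →
        ∃ m : ℕ, 1 ≤ m ∧
          HasProjExactSeq Bᵐᵒᵖ (ModuleCat.of Bᵐᵒᵖ M) (ModuleCat.of Bᵐᵒᵖ M) m := by
  simp only [hasProjExactSeq_iff_isSyzygy]
  have : IsSemisimpleRing (AlgebraicClosure k ⊗[k] (B ⧸ Ring.jacobson B)) :=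
    hsep _ (Ideal.Quotient.mkₐ k (Ring.jacobson B)) (Ideal.Quotient.mkₐ_surjective k _)
      ((Ideal.Quotient.mkₐ_ker k _).trans (Ideal.jacobson_bot).symm) (AlgebraicClosure k)
  have hrad : EnvRadicalLe k B := envRadicalLe_of_baseChange (K := AlgebraicClosure k)
  exact ⟨exists_period_of_isTwistedPeriodicAlgebra, isTwistedPeriodicAlgebra_of_exists_period hrad⟩
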